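/- arXiv:2403.04618 — 5 statements merged into one kernel-verified Lean document; each statement's English description precedes it below -/
import Mathlib

section
/- Coherence implies confluence (main theorem): every coherent CCS^spt process is structurally confluent for constructively enabled reductions. Precisely, if P is coherent, Q is a derivative of P, and Q --τ:H₁[R₁]--> Q₁ and Q --τ:H₂[R₂]--> Q₂ are c-enabled reductions with Q₁ ≢ Q₂, then there exist a process Q', subsets H₁' ⊆ H₁ and H₂' ⊆ H₂ and processes R₁', R₂' such that Q₁ --τ:H₂'[R₂']--> Q' and Q₂ --τ:H₁'[R₁']--> Q', and both reconverging reductions are again c-enabled. -/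
set_option autoImplicit true

namespace CCSspt

/-- Labels: channel names `a ∈ 𝒜`, co-names `ā ∈ 𝒜̄`, clock names `σ ∈ 𝒞`. -/
inductive Label : Type
  | name (a : ℕ)
  | coname (a : ℕ)
  | clock (c : ℕ)
  deriving DecidableEq

namespace Label

/-- The involution `ℓ ↦ ℓ̄`. -/
def bar : Label → Label
  | name a => coname a
  | coname a => name a
  | clock c => clock c

@[simp] theorem bar_bar (l : Label) : l.bar.bar = l := by cases l <;> rfl

/-- rendez-vous labels `ℛ = 𝒜 ∪ 𝒜̄` -/
def isChan : Label → Prop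
  | name _ => True
  | coname _ => True
  | clock _ => False

/-- clock labels `𝒞` -/
def isClock : Label → Prop
  | clock _ => True
  | _ => False

/-- input labels `𝒜` -/
def isInput : Label → Prop
  | name _ => True
  | _ => False

/-- output labels `𝒜̄` -/
def isOutput : Label → Prop
  | coname _ => True
  | _ => False

end Label

/-- `K̄ = {ℓ̄ : ℓ ∈ K}` -/
def barSet (K : Set Label) : Set Label := Label.bar '' K

def chanLabels : Set Label := {l | l.isChan}
def clockLabels : Set Label := {l | l.isClock}

/-- Actions `Act = ℒ ∪ {τ}`. -/
inductive Act : Type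
  | vis (l : Label)
  | tau
  deriving DecidableEq

namespace Act

def isClock : Act → Prop
  | vis l => l.isClock
  | tau => False

def isChan : Act → Prop
  | vis l => l.isChan
  | tau => False

end Act

/-- the synchronisation action `ℓ | ℓ̄`: `τ` for rendez-vous labels, `σ` for clocks -/
def Label.sync : Label → Act
  | .clock c => .vis (.clock c)
  | .name _ => .tau
  | .coname _ => .tau

def visSet (K : Set Label) : Set Act := Act.vis '' K

/-- CCS^spt processes.  Process identifiers `ident n` have defining
equations given by an environment `env : ℕ → Proc`. -/
inductive Proc : Type
  | nil
  | pre (l : Label) (H : Set Label) (P : Proc)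
  | sum (P Q : Proc)
  | par (P Q : Proc)
  | restr (P : Proc) (L : Set Label)
  | hide (P : Proc) (L : Set Label)
  | ident (n : ℕ)

/-- visible labels `vA(P)` -/
inductive VisLabel (env : ℕ → Proc) : Proc → Label → Prop
  | pre_act : VisLabel env (.pre l H P) l
  | pre_blk (h : x ∈ H) : VisLabel env (.pre l H P) x
  | pre_cont : VisLabel env P x → VisLabel env (.pre l H P) x
  | sum_l : VisLabel env P x → VisLabel env (.sum P Q) x
  | sum_r : VisLabel env Q x → VisLabel env (.sum P Q) x
  | par_l : VisLabel env P x → VisLabel env (.par P Q) x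
  | par_r : VisLabel env Q x → VisLabel env (.par P Q) x
  | restr : VisLabel env P x → x ∉ L → x.bar ∉ L → VisLabel env (.restr P L) x
  | hide : VisLabel env P x → x ∉ L → x.bar ∉ L → VisLabel env (.hide P L) x
  | ident : VisLabel env (env n) x → VisLabel env (.ident n) x

/-- structural congruence `≡` -/
inductive SC (env : ℕ → Proc) : Proc → Proc → Prop
  | refl (P) : SC env P P
  | symm : SC env P Q → SC env Q P
  | trans : SC env P Q → SC env Q R → SC env P R
  | pre_congr : SC env P Q → SC env (.pre l H P) (.pre l H Q)
  | sum_congr : SC env P P' → SC env Q Q' → SC env (.sum P Q) (.sum P' Q')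
  | par_congr : SC env P P' → SC env Q Q' → SC env (.par P Q) (.par P' Q')
  | restr_congr : SC env P Q → SC env (.restr P L) (.restr Q L)
  | hide_congr : SC env P Q → SC env (.hide P L) (.hide Q L)
  | const : SC env (.ident n) (env n)
  | sum_comm : SC env (.sum P Q) (.sum Q P)
  | sum_assoc : SC env (.sum (.sum P Q) R) (.sum P (.sum Q R))
  | sum_zero : SC env (.sum P .nil) P
  | sum_idem : SC env (.sum P P) P
  | par_comm : SC env (.par P Q) (.par Q P)
  | par_assoc : SC env (.par (.par P Q) R) (.par P (.par Q R))
  | par_zero : SC env (.par P .nil) P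
  | restr_restr : SC env (.restr (.restr P L) L') (.restr P (L ∪ L'))
  | hide_hide : SC env (.hide (.hide P L) L') (.hide P (L ∪ L'))
  | restr_nil : SC env (.restr .nil L) .nil
  | hide_nil : SC env (.hide .nil L) .nil
  | restr_pre_in (h : l ∈ L ∨ l.bar ∈ L) : SC env (.restr (.pre l H P) L) .nil
  | restr_pre_out (h₁ : l ∉ L) (h₂ : l.bar ∉ L) :
      SC env (.restr (.pre l H P) L) (.pre l H (.restr P L))
  | restr_sum : SC env (.restr (.sum P Q) L) (.sum (.restr P L) (.restr Q L))
  | restr_scope_sum (h : ∀ x, VisLabel env P x → x ∉ L ∧ x.bar ∉ L) :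
      SC env (.restr (.sum P Q) L) (.sum P (.restr Q L))
  | restr_scope_par (h : ∀ x, VisLabel env P x → x ∉ L ∧ x.bar ∉ L) :
      SC env (.restr (.par P Q) L) (.par P (.restr Q L))
  | restr_par (h : ∀ x, VisLabel env P x → VisLabel env Q x.bar → x ∉ L ∧ x.bar ∉ L) :
      SC env (.restr (.par P Q) L) (.par (.restr P L) (.restr Q L))

/-- strong initial actions `iA(P)` -/
inductive InitAct (env : ℕ → Proc) : Proc → Act → Prop
  | pre : InitAct env (.pre l H P) (.vis l)
  | sum_l : InitAct env P a → InitAct env (.sum P Q) a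
  | sum_r : InitAct env Q a → InitAct env (.sum P Q) a
  | par_l : InitAct env P a → ¬ a.isClock → InitAct env (.par P Q) a
  | par_r : InitAct env Q a → ¬ a.isClock → InitAct env (.par P Q) a
  | par_sync : InitAct env P (.vis l) → InitAct env Q (.vis l.bar) →
      InitAct env (.par P Q) l.sync
  | restr : InitAct env P a → (∀ l : Label, a = .vis l → l ∉ L ∧ l.bar ∉ L) →
      InitAct env (.restr P L) a
  | hide_keep : InitAct env P a → (∀ l : Label, a = .vis l → l ∉ L) →
      InitAct env (.hide P L) a
  | hide_tau : InitAct env P (.vis l) → l ∈ L → InitAct env (.hide P L) .tau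
  | ident : InitAct env (env n) a → InitAct env (.ident n) a

/-- `īA(P) = {ℓ̄ : ℓ ∈ iA(P)}`, as a set of actions -/
def coInit (env : ℕ → Proc) (P : Proc) : Set Act :=
  {a | ∃ l : Label, a = .vis l.bar ∧ InitAct env P (.vis l)}

/-- the `race(P|Q)` component of rule (Par₃) -/
def race (env : ℕ → Proc) (P Q : Proc) (l : Label) (H₁ H₂ : Set Act) : Set Act :=
  {a | a = Act.tau ∧
    (¬ (H₁ ∩ coInit env Q ⊆ {Act.vis l}) ∨ ¬ (H₂ ∩ coInit env P ⊆ {Act.vis l.bar}))}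

/-- the labelled transition relation `P --α:H[R]--> Q` -/
inductive Step (env : ℕ → Proc) : Proc → Act → Set Act → Proc → Proc → Prop
  | act : Step env (.pre l H P) (.vis l) (visSet H) .nil P
  | struct : Step env P' a H R' Q' → SC env P P' → SC env Q Q' → SC env R R' →
      Step env P a H R Q
  | sum_l : Step env P a H R P' → Step env (.sum P Q) a H R P'
  | sum_r : Step env Q a H R Q' → Step env (.sum P Q) a H R Q'
  | par_l : Step env P a H R P' → ¬ a.isClock →
      Step env (.par P Q) a H (.par R Q) (.par P' Q)
  | par_r : Step env Q a H R Q' → ¬ a.isClock →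
      Step env (.par P Q) a H (.par P R) (.par P Q')
  | par_sync : Step env P (.vis l) H₁ R₁ P' → Step env Q (.vis l.bar) H₂ R₂ Q' →
      Step env (.par P Q) l.sync (H₁ ∪ H₂ ∪ race env P Q l H₁ H₂) (.par R₁ R₂) (.par P' Q')
  | restr : Step env P a H R Q → (∀ l : Label, a = .vis l → l ∉ L ∧ l.bar ∉ L) →
      Step env (.restr P L) a (H \ visSet (L ∪ barSet L)) (.restr R L) (.restr Q L)
  | hide_keep : Step env P a H R Q → (∀ l : Label, a = .vis l → l ∉ L) →
      Step env (.hide P L) a (H \ visSet L) (.hide R L) (.hide Q L)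
  | hide_tau : Step env P (.vis l) H R Q → l ∈ L →
      Step env (.hide P L) .tau (H \ visSet L) (.hide R L) (.hide Q L)

/-- `P --α--> Q` -/
def StepA (env : ℕ → Proc) (P : Proc) (a : Act) (Q : Proc) : Prop :=
  ∃ H R, Step env P a H R Q

/-- `Q` is a derivative of `P` -/
def Deriv (env : ℕ → Proc) : Proc → Proc → Prop :=
  Relation.ReflTransGen (fun P Q => ∃ a, StepA env P a Q)

/-- weak initial actions `iA^τ(P)` -/
inductive WInit (env : ℕ → Proc) : Proc → Act → Prop
  | init : InitAct env P a → WInit env P a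
  | step : StepA env P .tau Q → WInit env Q a → WInit env P a

/-- potential actions `iA*(P) ⊆ ℒ` -/
inductive PotAct (env : ℕ → Proc) : Proc → Label → Prop
  | init : InitAct env P (.vis l) → PotAct env P l
  | step : StepA env P a Q → (a = Act.tau ∨ ∃ l' : Label, l'.isChan ∧ a = .vis l') →
      PotAct env Q l → PotAct env P l

/-- `īA^τ(P)` as a set of actions -/
def coWInit (env : ℕ → Proc) (P : Proc) : Set Act :=
  {a | ∃ l : Label, a = .vis l.bar ∧ WInit env P (.vis l)}

/-- `īA*(P)` as a set of actions -/
def coPot (env : ℕ → Proc) (P : Proc) : Set Act :=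
  {a | ∃ l : Label, a = .vis l.bar ∧ PotAct env P l}

/-- weakly enabled: `H ∩ (īA(R) ∪ {τ}) = ∅` -/
def WEnabled (env : ℕ → Proc) (H : Set Act) (R : Proc) : Prop :=
  H ∩ (coInit env R ∪ {Act.tau}) = ∅

/-- strongly enabled: `H ∩ (īA^τ(R) ∪ {τ}) = ∅` -/
def SEnabled (env : ℕ → Proc) (H : Set Act) (R : Proc) : Prop :=
  H ∩ (coWInit env R ∪ {Act.tau}) = ∅

/-- constructively enabled: `H ∩ (īA*(R) ∪ {τ}) = ∅` -/
def CEnabled (env : ℕ → Proc) (H : Set Act) (R : Proc) : Prop :=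
  H ∩ (coPot env R ∪ {Act.tau}) = ∅

/-- the c-actions `α₁:H₁[E₁]` and `α₂:H₂[E₂]` are interference-free -/
def InterfFree (env : ℕ → Proc) (a₁ : Act) (H₁ : Set Act) (E₁ : Proc)
    (a₂ : Act) (H₂ : Set Act) (E₂ : Proc) : Prop :=
  (a₁ ≠ a₂ → a₁ ∉ H₂ ∧ a₂ ∉ H₁) ∧
  (a₂ = Act.tau → H₁ ∩ (coPot env E₁ ∪ {Act.tau}) = ∅) ∧
  (a₁ = Act.tau → H₂ ∩ (coPot env E₂ ∪ {Act.tau}) = ∅)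

/-- residual transition `P ⇒α Q` -/
def Residual (env : ℕ → Proc) : Act → Proc → Proc → Prop
  | .vis l, P, Q => StepA env P (.vis l) Q ∨ SC env P Q
  | .tau, P, Q => StepA env P .tau Q ∨
      ∃ l : Label, l.isChan ∧ (StepA env P (.vis l) Q ∨ StepA env P (.vis l.bar) Q)

/-- `α` is a rendez-vous (channel) action, i.e. `α ∈ ℛ` -/
def ChanAct (a : Act) : Prop := ∃ l : Label, l.isChan ∧ a = .vis l

/-- structural coherence -/
def Coherent (env : ℕ → Proc) (P : Proc) : Prop :=
  ∀ Q, Deriv env P Q →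
    ∀ a₁ H₁ E₁ Q₁ a₂ H₂ E₂ Q₂,
      Step env Q a₁ H₁ E₁ Q₁ → Step env Q a₂ H₂ E₂ Q₂ →
      (a₁ ≠ a₂ ∨ ¬ SC env Q₁ Q₂ ∨ (ChanAct a₁ ∧ ChanAct a₂ ∧ a₁ ∉ H₂ ∧ a₂ ∉ H₁)) →
      InterfFree env a₁ H₁ E₁ a₂ H₂ E₂ →
      ∃ H₁' H₂' E₁' E₂' Q',
        H₁' ⊆ H₁ ∧ H₂' ⊆ H₂ ∧
        Step env Q₁ a₂ H₂' E₂' Q' ∧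
        Step env Q₂ a₁ H₁' E₁' Q' ∧
        Residual env a₂ E₁ E₁' ∧
        Residual env a₁ E₂ E₂' ∧
        (((ChanAct a₁ ∧ ChanAct a₂ ∧ (a₁ ≠ a₂ ∨ ¬ SC env Q₁ Q₂)) ∨ a₁.isClock ∨ a₂.isClock) →
          StepA env E₁ a₂ E₁' ∧ StepA env E₂ a₁ E₂')

/-- precedence policies `π = (L, ⟶̇)` with `⟶̇ ⊆ L × L` -/
structure Policy where
  alph : Set Label
  prec : Label → Label → Prop
  prec_dom : ∀ {l₁ l₂}, prec l₁ l₂ → l₁ ∈ alph ∧ l₂ ∈ alph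

namespace Policy

/-- concurrent independence `π ⊩ ℓ₁ ◇ ℓ₂` -/
def Indep (π : Policy) (l₁ l₂ : Label) : Prop :=
  l₁ ∈ π.alph ∧ l₂ ∈ π.alph ∧ ¬ π.prec l₁ l₂ ∧ ¬ π.prec l₂ l₁

/-- the ordering `π₁ ⪯ π₂` -/
def le (π₁ π₂ : Policy) : Prop :=
  π₁.alph ⊆ π₂.alph ∧
  ∀ l₁ l₂, l₁ ∈ π₁.alph → l₂ ∈ π₁.alph → π₂.prec l₁ l₂ → π₁.prec l₁ l₂

/-- the dual policy `π̄` -/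
def dual (π : Policy) : Policy where
  alph := barSet π.alph
  prec := fun x y =>
    x.bar ∈ π.alph ∧ y.bar ∈ π.alph ∧ (x.bar = y.bar ∨ π.Indep x.bar y.bar)
  prec_dom := by
    intro x y h
    exact ⟨⟨x.bar, h.1, Label.bar_bar x⟩, ⟨y.bar, h.2.1, Label.bar_bar y⟩⟩

/-- pivot policies: `π̄ ⪯ π` -/
def IsPivot (π : Policy) : Prop := Policy.le π.dual π

/-- inclusion of policies `π ⊆ π'` -/
def sub (π π' : Policy) : Prop :=
  π.alph ⊆ π'.alph ∧ ∀ l₁ l₂, π.prec l₁ l₂ → π'.prec l₁ l₂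

/-- `π ∖ K`: restriction of `π` to the alphabet `L − (K ∪ K̄)` -/
def restrict (π : Policy) (K : Set Label) : Policy where
  alph := π.alph \ {l | l ∈ K ∨ l.bar ∈ K}
  prec := fun x y => π.prec x y ∧ ¬ (x ∈ K ∨ x.bar ∈ K) ∧ ¬ (y ∈ K ∨ y.bar ∈ K)
  prec_dom := by
    intro x y h
    exact ⟨⟨(π.prec_dom h.1).1, h.2.1⟩, ⟨(π.prec_dom h.1).2, h.2.2⟩⟩

end Policy

/-- the input-scheduled policy `π_is` -/
def piIS : Policy where
  alph := Set.univ
  prec := fun l₁ l₂ => l₁ = l₂ ∨ ((l₁.isInput ∨ l₁.isClock) ∧ (l₂.isInput ∨ l₂.isClock))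
  prec_dom := by intro l₁ l₂ _; exact ⟨trivial, trivial⟩

/-- conformance of a process to a policy -/
def Conforms (env : ℕ → Proc) (P : Proc) (π : Policy) : Prop :=
  ∀ Q, Deriv env P Q → ∀ (l : Label) (H : Set Act) (R Q' : Proc),
    Step env Q (.vis l) H R Q' →
      l ∈ π.alph ∧ ∀ l' : Label, Act.vis l' ∈ H → π.prec l' l

/-- `P : π` : `P` is coherent and conforms to `π` -/
def Spec (env : ℕ → Proc) (P : Proc) (π : Policy) : Prop :=
  Coherent env P ∧ Conforms env P π

/-- `π` is precedence-closed for `K` -/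
def PrecClosed (π : Policy) (K : Set Label) : Prop :=
  ∀ l₁ l₂, l₁ ∈ K → π.prec l₁ l₂ → l₂ ∈ K

/-- single-threaded processes: no parallel sub-process -/
inductive SingleThreaded (env : ℕ → Proc) : Proc → Prop
  | nil : SingleThreaded env .nil
  | pre : SingleThreaded env P → SingleThreaded env (.pre l H P)
  | sum : SingleThreaded env P → SingleThreaded env Q → SingleThreaded env (.sum P Q)
  | restr : SingleThreaded env P → SingleThreaded env (.restr P L)
  | hide : SingleThreaded env P → SingleThreaded env (.hide P L)
  | ident : SingleThreaded env (env n) → SingleThreaded env (.ident n)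

/-- unclocked processes: no clock prefix occurs -/
inductive Unclocked (env : ℕ → Proc) : Proc → Prop
  | nil : Unclocked env .nil
  | pre : ¬ l.isClock → Unclocked env P → Unclocked env (.pre l H P)
  | sum : Unclocked env P → Unclocked env Q → Unclocked env (.sum P Q)
  | par : Unclocked env P → Unclocked env Q → Unclocked env (.par P Q)
  | restr : Unclocked env P → Unclocked env (.restr P L)
  | hide : Unclocked env P → Unclocked env (.hide P L)
  | ident : Unclocked env (env n) → Unclocked env (.ident n)

/-- free processes: every action prefix has empty blocking set -/
inductive Free (env : ℕ → Proc) : Proc → Prop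
  | nil : Free env .nil
  | pre : Free env P → Free env (.pre l (∅ : Set Label) P)
  | sum : Free env P → Free env Q → Free env (.sum P Q)
  | par : Free env P → Free env Q → Free env (.par P Q)
  | restr : Free env P → Free env (.restr P L)
  | hide : Free env P → Free env (.hide P L)
  | ident : Free env (env n) → Free env (.ident n)


theorem Label.isChan_bar {l : Label} (h : l.isChan) : l.bar.isChan := by
  cases l <;> simp_all [Label.bar, Label.isChan]

theorem potAct_of_residual {env : ℕ → Proc} {E E' : Proc} (h : Residual env .tau E E')
    {l : Label} (hl : PotAct env E' l) : PotAct env E l := by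
  rcases h with h | ⟨k, hk, h | h⟩
  · exact .step h (Or.inl rfl) hl
  · exact .step h (Or.inr ⟨k, hk, rfl⟩) hl
  · exact .step h (Or.inr ⟨k.bar, Label.isChan_bar hk, rfl⟩) hl

theorem cEnabled_residual {env : ℕ → Proc} {E E' : Proc} {H H' : Set Act}
    (h : Residual env .tau E E') (hH : H' ⊆ H) (he : CEnabled env H E) :
    CEnabled env H' E' := by
  unfold CEnabled at *
  rw [Set.eq_empty_iff_forall_notMem] at *
  rintro a ⟨ha, ⟨l, rfl, hl⟩ | ht⟩
  · exact he _ ⟨hH ha, Or.inl ⟨l, rfl, potAct_of_residual h hl⟩⟩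
  · exact he _ ⟨hH ha, Or.inr ht⟩

/-- Coherence implies confluence: every coherent process is
structurally confluent for constructively enabled reductions. -/
theorem coherence_implies_confluence (env : ℕ → Proc) (P Q : Proc)
    (hP : Coherent env P) (hQ : Deriv env P Q)
    (H₁ H₂ : Set Act) (R₁ R₂ Q₁ Q₂ : Proc)
    (h₁ : Step env Q Act.tau H₁ R₁ Q₁) (h₂ : Step env Q Act.tau H₂ R₂ Q₂)
    (he₁ : CEnabled env H₁ R₁) (he₂ : CEnabled env H₂ R₂)
    (hne : ¬ SC env Q₁ Q₂) :
    ∃ (Q' : Proc) (H₁' H₂' : Set Act) (R₁' R₂' : Proc),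
      H₁' ⊆ H₁ ∧ H₂' ⊆ H₂ ∧
      Step env Q₁ Act.tau H₂' R₂' Q' ∧ Step env Q₂ Act.tau H₁' R₁' Q' ∧
      CEnabled env H₂' R₂' ∧ CEnabled env H₁' R₁' := by
  obtain ⟨H₁', H₂', E₁', E₂', Q', s₁, s₂, t₁, t₂, r₁, r₂, -⟩ :=
    hP Q hQ _ _ _ _ _ _ _ _ h₁ h₂ (Or.inr (Or.inl hne))
      ⟨fun h => absurd rfl h, fun _ => he₁, fun _ => he₂⟩
  exact ⟨Q', H₁', H₂', E₁', E₂', s₁, s₂, t₁, t₂, cEnabled_residual r₂ s₂ he₂,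
    cEnabled_residual r₁ s₁ he₁⟩

end CCSspt
end

section
/- Clock interference: let P be a coherent process offering weakly enabled transitions P --α:H₁[R₁]--> P₁ and P --σ:H₂[R₂]--> P₂, where σ ∈ 𝒞 is a clock and α ∈ Act with α ≠ σ. Then α ∈ H₂ or σ ∈ H₁. In particular, if α = τ then σ ∈ H₁. -/
set_option autoImplicit true

namespace CCSspt

/-- over-approximation of the initial offers of a process, invariant under `≡` -/
inductive Off (env : ℕ → Proc) : Proc → Act → Prop
  | pre : Off env (.pre l H P) (.vis l)
  | sum_l : Off env P a → Off env (.sum P Q) a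
  | sum_r : Off env Q a → Off env (.sum P Q) a
  | par_l : Off env P a → Off env (.par P Q) a
  | par_r : Off env Q a → Off env (.par P Q) a
  | par_sync : Off env P (.vis l) → Off env Q (.vis l.bar) → Off env (.par P Q) .tau
  | restr : Off env P a → (∀ l : Label, a = .vis l → l ∉ L ∧ l.bar ∉ L) →
      Off env (.restr P L) a
  | hide_keep : Off env P a → (∀ l : Label, a = .vis l → l ∉ L ∧ l.bar ∉ L) →
      Off env (.hide P L) a
  | hide_tau : Off env P (.vis l) → (l ∈ L ∨ l.bar ∈ L) → Off env (.hide P L) .tau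
  | ident : Off env (env n) a → Off env (.ident n) a

theorem off_nil (env : ℕ → Proc) (a : Act) : Off env .nil a ↔ False :=
  ⟨fun h => (by cases h), False.elim⟩

theorem off_pre (env : ℕ → Proc) : Off env (.pre l H P) a ↔ a = .vis l :=
  ⟨fun h => by cases h; rfl, fun h => h ▸ .pre⟩

theorem off_sum (env : ℕ → Proc) : Off env (.sum P Q) a ↔ Off env P a ∨ Off env Q a :=
  ⟨fun h => by cases h <;> simp [*], fun h => h.elim .sum_l .sum_r⟩

theorem off_ident (env : ℕ → Proc) : Off env (.ident n) a ↔ Off env (env n) a :=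
  ⟨fun h => by cases h; assumption, .ident⟩

theorem off_par (env : ℕ → Proc) : Off env (.par P Q) a ↔ Off env P a ∨ Off env Q a ∨
    (a = .tau ∧ ∃ l : Label, Off env P (.vis l) ∧ Off env Q (.vis l.bar)) := by
  constructor
  · intro h
    cases h with
    | par_l h => exact .inl h
    | par_r h => exact .inr (.inl h)
    | par_sync h h' => exact .inr (.inr ⟨rfl, _, h, h'⟩)
  · rintro (h | h | ⟨rfl, l, h, h'⟩)
    · exact .par_l h
    · exact .par_r h
    · exact .par_sync h h'

theorem off_restr (env : ℕ → Proc) : Off env (.restr P L) a ↔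
    Off env P a ∧ (∀ l : Label, a = .vis l → l ∉ L ∧ l.bar ∉ L) := by
  constructor
  · intro h
    cases h with
    | restr h h' => exact ⟨h, h'⟩
  · rintro ⟨h, h'⟩
    exact .restr h h'

theorem off_hide (env : ℕ → Proc) : Off env (.hide P L) a ↔
    (Off env P a ∧ (∀ l : Label, a = .vis l → l ∉ L ∧ l.bar ∉ L)) ∨
    (a = .tau ∧ ∃ l : Label, Off env P (.vis l) ∧ (l ∈ L ∨ l.bar ∈ L)) := by
  constructor
  · intro h
    cases h with
    | hide_keep h h' => exact .inl ⟨h, h'⟩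
    | hide_tau h h' => exact .inr ⟨rfl, _, h, h'⟩
  · rintro (⟨h, h'⟩ | ⟨rfl, l, h, h'⟩)
    · exact .hide_keep h h'
    · exact .hide_tau h h'

theorem off_vis {env : ℕ → Proc} (h : Off env P a) : ∀ l, a = .vis l → VisLabel env P l := by
  induction h with
  | pre => rintro l ⟨⟩; exact .pre_act
  | sum_l _ ih => intro l h; exact .sum_l (ih l h)
  | sum_r _ ih => intro l h; exact .sum_r (ih l h)
  | par_l _ ih => intro l h; exact .par_l (ih l h)
  | par_r _ ih => intro l h; exact .par_r (ih l h)
  | par_sync => rintro l ⟨⟩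
  | restr _ h' ih => intro l h; exact .restr (ih l h) (h' l h).1 (h' l h).2
  | hide_keep _ h' ih => intro l h; exact .hide (ih l h) (h' l h).1 (h' l h).2
  | hide_tau => rintro l ⟨⟩
  | ident _ ih => intro l h; exact .ident (ih l h)

theorem off_sc {env : ℕ → Proc} (h : SC env P Q) : ∀ a, Off env P a ↔ Off env Q a := by
  induction h with
  | refl => intro a; rfl
  | symm _ ih => intro a; exact (ih a).symm
  | trans _ _ ih ih' => intro a; exact (ih a).trans (ih' a)
  | pre_congr _ _ => intro a; simp [off_pre]
  | sum_congr _ _ ih ih' => intro a; simp [off_sum, ih, ih']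
  | par_congr _ _ ih ih' => intro a; simp [off_par, ih, ih']
  | restr_congr _ ih => intro a; simp [off_restr, ih]
  | hide_congr _ ih => intro a; simp [off_hide, ih]
  | const => intro a; simp [off_ident]
  | sum_comm => intro a; simp [off_sum, or_comm]
  | sum_assoc => intro a; simp [off_sum, or_assoc]
  | sum_zero => intro a; simp [off_sum, off_nil]
  | sum_idem => intro a; simp [off_sum]
  | par_comm =>
    intro a
    have key : ∀ P Q, Off env (.par P Q) a → Off env (.par Q P) a := by
      intro P Q h
      rw [off_par] at h ⊢
      rcases h with h | h | ⟨rfl, l, h, h'⟩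
      · exact .inr (.inl h)
      · exact .inl h
      · exact .inr (.inr ⟨rfl, l.bar, h', by simpa using h⟩)
    exact ⟨key _ _, key _ _⟩
  | par_assoc =>
    intro a
    simp only [off_par, reduceCtorEq, false_and, or_false]
    grind
  | par_zero => intro a; simp [off_par, off_nil]
  | restr_restr => intro a; simp only [off_restr, Set.mem_union]; grind
  | hide_hide => intro a; simp only [off_hide, Set.mem_union]; grind
  | restr_nil => intro a; simp [off_restr, off_nil]
  | hide_nil => intro a; simp [off_hide, off_nil]
  | restr_pre_in h => intro a; simp only [off_restr, off_pre, off_nil]; grind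
  | restr_pre_out h h' => intro a; simp only [off_restr, off_pre]; grind
  | restr_sum => intro a; simp only [off_restr, off_sum]; grind
  | @restr_scope_sum P L Q h =>
    intro a
    have := fun (a : Act) (h : Off env P a) => off_vis h
    simp only [off_restr, off_sum]; grind
  | @restr_scope_par P L Q h =>
    intro a
    have := fun (l : Label) (h' : Off env P (.vis l)) => h l (off_vis h' l rfl)
    simp only [off_restr, off_par]
    cases a <;> simp [Label.bar_bar] <;> grind [Label.bar_bar]
  | @restr_par P Q L h =>
    intro a
    have := fun (l : Label) (h' : Off env P (.vis l)) (h'' : Off env Q (.vis l.bar)) =>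
      h l (off_vis h' l rfl) (off_vis h'' _ rfl)
    simp only [off_restr, off_par]
    cases a <;> simp [Label.bar_bar] <;> grind [Label.bar_bar]

theorem off_step {env : ℕ → Proc} (h : Step env P a H R Q) : Off env P a ∨ Off env P .tau := by
  induction h with
  | act => exact .inl .pre
  | struct _ h _ _ ih => simpa [off_sc h] using ih
  | sum_l _ ih => exact ih.imp .sum_l .sum_l
  | sum_r _ ih => exact ih.imp .sum_r .sum_r
  | par_l _ _ ih => exact ih.imp .par_l .par_l
  | par_r _ _ ih => exact ih.imp .par_r .par_r
  | par_sync _ _ ih ih' =>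
    right
    rcases ih with h | h
    · rcases ih' with h' | h'
      · exact .par_sync h h'
      · exact .par_r h'
    · exact .par_l h
  | restr _ h ih => exact ih.imp (fun h' => .restr h' h) (fun h' => .restr h' (by simp))
  | hide_keep _ h ih =>
    simp only [off_hide]
    grind
  | hide_tau _ h ih => simp only [off_hide]; grind

theorem off_init {env : ℕ → Proc} (h : InitAct env P a) : Off env P a ∨ Off env P .tau := by
  induction h with
  | pre => exact .inl .pre
  | sum_l _ ih => exact ih.imp .sum_l .sum_l
  | sum_r _ ih => exact ih.imp .sum_r .sum_r
  | par_l _ _ ih => exact ih.imp .par_l .par_l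
  | par_r _ _ ih => exact ih.imp .par_r .par_r
  | par_sync _ _ ih ih' =>
    right
    rcases ih with h | h
    · rcases ih' with h' | h'
      · exact .par_sync h h'
      · exact .par_r h'
    · exact .par_l h
  | restr _ h ih => exact ih.imp (fun h' => .restr h' h) (fun h' => .restr h' (by simp))
  | hide_keep _ h ih =>
    simp only [off_hide]
    grind
  | hide_tau _ h ih => simp only [off_hide]; grind
  | ident _ ih => exact ih.imp .ident .ident

theorem clock_ctx {env : ℕ → Proc} (h : Step env P a H R Q) :
    a.isClock → SC env R .nil := by
  induction h with
  | act => intro _; exact .refl _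
  | struct _ _ _ h ih => intro hc; exact .trans h (ih hc)
  | sum_l _ ih => exact ih
  | sum_r _ ih => exact ih
  | par_l _ h ih => exact fun hc => absurd hc h
  | par_r _ h ih => exact fun hc => absurd hc h
  | @par_sync _ l _ _ _ _ _ _ _ _ _ ih ih' =>
    intro hc
    cases l with
    | clock c => exact .trans (.par_congr (ih trivial) (ih' trivial)) .par_zero
    | name c => exact hc.elim
    | coname c => exact hc.elim
  | restr _ _ ih => exact fun hc => .trans (.restr_congr (ih hc)) .restr_nil
  | hide_keep _ _ ih => exact fun hc => .trans (.hide_congr (ih hc)) .hide_nil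
  | hide_tau => exact fun hc => hc.elim

/-- Clock interference. -/
theorem clock_interference (env : ℕ → Proc) (P : Proc) (hP : Coherent env P)
    (a : Act) (c : ℕ) (H₁ H₂ : Set Act) (R₁ R₂ P₁ P₂ : Proc)
    (hne : a ≠ Act.vis (Label.clock c))
    (h₁ : Step env P a H₁ R₁ P₁)
    (h₂ : Step env P (Act.vis (Label.clock c)) H₂ R₂ P₂)
    (he₁ : WEnabled env H₁ R₁) (he₂ : WEnabled env H₂ R₂) :
    (a ∈ H₂ ∨ Act.vis (Label.clock c) ∈ H₁) ∧
    (a = Act.tau → Act.vis (Label.clock c) ∈ H₁) := by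
  have hR : SC env R₂ .nil := clock_ctx h₂ trivial
  have hoff : ∀ b, ¬ Off env R₂ b := fun b h => (off_nil env b).1 ((off_sc hR b).1 h)
  have hstep : ∀ b Q, ¬ StepA env R₂ b Q := by
    rintro b Q ⟨H, R, h⟩
    exact (off_step h).elim (hoff _) (hoff _)
  have hpot : ∀ l, ¬ PotAct env R₂ l := by
    intro l h
    cases h with
    | init h => exact (off_init h).elim (hoff _) (hoff _)
    | step h _ _ => exact hstep _ _ h
  have htau : Act.tau ∉ H₂ := by
    intro h
    have : Act.tau ∈ H₂ ∩ (coInit env R₂ ∪ {Act.tau}) := ⟨h, .inr rfl⟩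
    rw [he₂] at this
    exact this
  have main : a ∈ H₂ ∨ Act.vis (Label.clock c) ∈ H₁ := by
    by_contra hcon
    rw [not_or] at hcon
    obtain ⟨_, _, _, _, _, _, _, _, _, _, _, hlast⟩ :=
      hP P Relation.ReflTransGen.refl _ _ _ _ _ _ _ _ h₁ h₂ (.inl hne)
        ⟨fun _ => hcon, fun h => by simp at h, fun _ => by
          ext b
          simp only [Set.mem_inter_iff, Set.mem_union, Set.mem_singleton_iff,
            Set.mem_empty_iff_false, iff_false]
          rintro ⟨hb, ⟨l, _, hl⟩ | rfl⟩
          · exact hpot l hl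
          · exact htau hb⟩
    exact hstep _ _ (hlast (.inr (.inr trivial))).2
  exact ⟨main, fun h => main.resolve_left (h ▸ htau)⟩

end CCSspt
end

section
/- Action determinism: let P be coherent with a transition P --ℓ:H₁[R₁]--> P₁ for some ℓ ∈ ℒ such that ℓ ∉ iA(R₁). Then for every transition P --ℓ:H₂[R₂]--> P₂ one has P₁ ≡ P₂. In particular, P is structurally clock-deterministic: for every clock σ ∈ 𝒞, if P --σ:H₁[R₁]--> P₁ and P --σ:H₂[R₂]--> P₂ then P₁ ≡ P₂. -/
set_option autoImplicit true

namespace CCSspt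

/-- Prefix transitions, with a flag recording whether the prefix is hidden from restriction. -/
inductive Tr (env : ℕ → Proc) (l : Label) (H : Set Label) : Bool → Proc → Proc → Prop
  | pre : Tr env l H false (.pre l H P) P
  | sum_l : Tr env l H h P P' → Tr env l H h (.sum P Q) P'
  | sum_r : Tr env l H h Q Q' → Tr env l H h (.sum P Q) Q'
  | par_l : Tr env l H h P P' → Tr env l H h (.par P Q) (.par P' Q)
  | par_r : Tr env l H h Q Q' → Tr env l H h (.par P Q) (.par P Q')
  | restr : Tr env l H h P P' → (h = true ∨ (l ∉ L ∧ l.bar ∉ L)) →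
      Tr env l H h (.restr P L) (.restr P' L)
  | hide_vis : Tr env l H h P P' → l ∉ K → l.bar ∉ K → Tr env l H h (.hide P K) (.hide P' K)
  | hide_hid : Tr env l H h P P' → l ∉ K → l.bar ∈ K → Tr env l H true (.hide P K) (.hide P' K)
  | ident : Tr env l H h (env n) P' → Tr env l H h (.ident n) P'

theorem Tr.vis_sub {env : ℕ → Proc} {l H h P P'} (t : Tr env l H h P P') :
    ∀ x, VisLabel env P' x → VisLabel env P x := by
  induction t with
  | pre => intro x hx; exact .pre_cont hx
  | sum_l _ ih => intro x hx; exact .sum_l (ih x hx)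
  | sum_r _ ih => intro x hx; exact .sum_r (ih x hx)
  | par_l _ ih =>
    intro x hx
    cases hx with
    | par_l a => exact .par_l (ih x a)
    | par_r a => exact .par_r a
  | par_r _ ih =>
    intro x hx
    cases hx with
    | par_l a => exact .par_l a
    | par_r a => exact .par_r (ih x a)
  | restr _ _ ih =>
    intro x hx
    cases hx with
    | restr a b c => exact .restr (ih x a) b c
  | hide_vis _ _ _ ih =>
    intro x hx
    cases hx with
    | hide a b c => exact .hide (ih x a) b c
  | hide_hid _ _ _ ih =>
    intro x hx
    cases hx with
    | hide a b c => exact .hide (ih x a) b c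
  | ident _ ih => intro x hx; exact .ident (ih x hx)

theorem Tr.vis {env : ℕ → Proc} {l H h P P'} (t : Tr env l H h P P') :
    h = false → VisLabel env P l := by
  induction t with
  | pre => intro _; exact .pre_act
  | sum_l _ ih => intro e; exact .sum_l (ih e)
  | sum_r _ ih => intro e; exact .sum_r (ih e)
  | par_l _ ih => intro e; exact .par_l (ih e)
  | par_r _ ih => intro e; exact .par_r (ih e)
  | restr _ c ih =>
    intro e
    rcases c with c | c
    · simp [c] at e
    · exact .restr (ih e) c.1 c.2
  | hide_vis _ a b ih => intro e; exact .hide (ih e) a b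
  | hide_hid _ _ _ ih => intro e; simp at e
  | ident _ ih => intro e; exact .ident (ih e)

theorem SC.restr_id {env : ℕ → Proc} {P L}
    (h : ∀ x, VisLabel env P x → x ∉ L ∧ x.bar ∉ L) : SC env (.restr P L) P :=
  .trans (.restr_congr (.symm .par_zero)) (.trans (.restr_scope_par h)
    (.trans (.par_congr (.refl _) .restr_nil) .par_zero))

theorem Tr.sc {env : ℕ → Proc} {l H P Q} (s : SC env P Q) : ∀ h,
    (∀ P', Tr env l H h P P' → ∃ Q', Tr env l H h Q Q' ∧ SC env P' Q') ∧
    (∀ Q', Tr env l H h Q Q' → ∃ P', Tr env l H h P P' ∧ SC env P' Q') := by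
  induction s with
  | refl P => exact fun h => ⟨fun P' t => ⟨P', t, .refl _⟩, fun P' t => ⟨P', t, .refl _⟩⟩
  | symm _ ih =>
    intro h
    refine ⟨fun P' t => ?_, fun P' t => ?_⟩
    · obtain ⟨q, a, b⟩ := (ih h).2 _ t; exact ⟨q, a, b.symm⟩
    · obtain ⟨q, a, b⟩ := (ih h).1 _ t; exact ⟨q, a, b.symm⟩
  | trans _ _ ih1 ih2 =>
    intro h
    refine ⟨fun P' t => ?_, fun P' t => ?_⟩
    · obtain ⟨q, a, b⟩ := (ih1 h).1 _ t
      obtain ⟨q2, a2, b2⟩ := (ih2 h).1 _ a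
      exact ⟨q2, a2, b.trans b2⟩
    · obtain ⟨q, a, b⟩ := (ih2 h).2 _ t
      obtain ⟨q2, a2, b2⟩ := (ih1 h).2 _ a
      exact ⟨q2, a2, b2.trans b⟩
  | pre_congr s _ =>
    intro h
    refine ⟨fun P' t => ?_, fun P' t => ?_⟩
    · cases t; exact ⟨_, .pre, s⟩
    · cases t; exact ⟨_, .pre, s⟩
  | sum_congr s1 s2 ih1 ih2 =>
    intro h
    refine ⟨fun P' t => ?_, fun P' t => ?_⟩
    · cases t with
      | sum_l t => obtain ⟨q, a, b⟩ := (ih1 h).1 _ t; exact ⟨q, .sum_l a, b⟩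
      | sum_r t => obtain ⟨q, a, b⟩ := (ih2 h).1 _ t; exact ⟨q, .sum_r a, b⟩
    · cases t with
      | sum_l t => obtain ⟨q, a, b⟩ := (ih1 h).2 _ t; exact ⟨q, .sum_l a, b⟩
      | sum_r t => obtain ⟨q, a, b⟩ := (ih2 h).2 _ t; exact ⟨q, .sum_r a, b⟩
  | par_congr s1 s2 ih1 ih2 =>
    intro h
    refine ⟨fun P' t => ?_, fun P' t => ?_⟩
    · cases t with
      | par_l t => obtain ⟨q, a, b⟩ := (ih1 h).1 _ t; exact ⟨_, .par_l a, .par_congr b s2⟩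
      | par_r t => obtain ⟨q, a, b⟩ := (ih2 h).1 _ t; exact ⟨_, .par_r a, .par_congr s1 b⟩
    · cases t with
      | par_l t => obtain ⟨q, a, b⟩ := (ih1 h).2 _ t; exact ⟨_, .par_l a, .par_congr b s2⟩
      | par_r t => obtain ⟨q, a, b⟩ := (ih2 h).2 _ t; exact ⟨_, .par_r a, .par_congr s1 b⟩
  | restr_congr s ih =>
    intro h
    refine ⟨fun P' t => ?_, fun P' t => ?_⟩
    · cases t with
      | restr t c => obtain ⟨q, a, b⟩ := (ih h).1 _ t; exact ⟨_, .restr a c, .restr_congr b⟩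
    · cases t with
      | restr t c => obtain ⟨q, a, b⟩ := (ih h).2 _ t; exact ⟨_, .restr a c, .restr_congr b⟩
  | hide_congr s ih =>
    intro h
    refine ⟨fun P' t => ?_, fun P' t => ?_⟩
    · cases t with
      | hide_vis t c d =>
        obtain ⟨q, a, b⟩ := (ih _).1 _ t; exact ⟨_, .hide_vis a c d, .hide_congr b⟩
      | hide_hid t c d =>
        obtain ⟨q, a, b⟩ := (ih _).1 _ t; exact ⟨_, .hide_hid a c d, .hide_congr b⟩
    · cases t with
      | hide_vis t c d =>
        obtain ⟨q, a, b⟩ := (ih _).2 _ t; exact ⟨_, .hide_vis a c d, .hide_congr b⟩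
      | hide_hid t c d =>
        obtain ⟨q, a, b⟩ := (ih _).2 _ t; exact ⟨_, .hide_hid a c d, .hide_congr b⟩
  | const =>
    intro h
    refine ⟨fun P' t => ?_, fun P' t => ⟨_, .ident t, .refl _⟩⟩
    cases t with
    | ident t => exact ⟨_, t, .refl _⟩
  | sum_comm =>
    intro h
    refine ⟨fun P' t => ?_, fun P' t => ?_⟩
    · cases t with
      | sum_l t => exact ⟨_, .sum_r t, .refl _⟩
      | sum_r t => exact ⟨_, .sum_l t, .refl _⟩
    · cases t with
      | sum_l t => exact ⟨_, .sum_r t, .refl _⟩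
      | sum_r t => exact ⟨_, .sum_l t, .refl _⟩
  | sum_assoc =>
    intro h
    refine ⟨fun P' t => ?_, fun P' t => ?_⟩
    · cases t with
      | sum_l t =>
        cases t with
        | sum_l t => exact ⟨_, .sum_l t, .refl _⟩
        | sum_r t => exact ⟨_, .sum_r (.sum_l t), .refl _⟩
      | sum_r t => exact ⟨_, .sum_r (.sum_r t), .refl _⟩
    · cases t with
      | sum_l t => exact ⟨_, .sum_l (.sum_l t), .refl _⟩
      | sum_r t =>
        cases t with
        | sum_l t => exact ⟨_, .sum_l (.sum_r t), .refl _⟩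
        | sum_r t => exact ⟨_, .sum_r t, .refl _⟩
  | sum_zero =>
    intro h
    refine ⟨fun P' t => ?_, fun P' t => ⟨_, .sum_l t, .refl _⟩⟩
    cases t with
    | sum_l t => exact ⟨_, t, .refl _⟩
    | sum_r t => cases t
  | sum_idem =>
    intro h
    refine ⟨fun P' t => ?_, fun P' t => ⟨_, .sum_l t, .refl _⟩⟩
    cases t with
    | sum_l t => exact ⟨_, t, .refl _⟩
    | sum_r t => exact ⟨_, t, .refl _⟩
  | par_comm =>
    intro h
    refine ⟨fun P' t => ?_, fun P' t => ?_⟩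
    · cases t with
      | par_l t => exact ⟨_, .par_r t, .par_comm⟩
      | par_r t => exact ⟨_, .par_l t, .par_comm⟩
    · cases t with
      | par_l t => exact ⟨_, .par_r t, .par_comm⟩
      | par_r t => exact ⟨_, .par_l t, .par_comm⟩
  | par_assoc =>
    intro h
    refine ⟨fun P' t => ?_, fun P' t => ?_⟩
    · cases t with
      | par_l t =>
        cases t with
        | par_l t => exact ⟨_, .par_l t, .par_assoc⟩
        | par_r t => exact ⟨_, .par_r (.par_l t), .par_assoc⟩
      | par_r t => exact ⟨_, .par_r (.par_r t), .par_assoc⟩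
    · cases t with
      | par_l t => exact ⟨_, .par_l (.par_l t), .par_assoc⟩
      | par_r t =>
        cases t with
        | par_l t => exact ⟨_, .par_l (.par_r t), .par_assoc⟩
        | par_r t => exact ⟨_, .par_r t, .par_assoc⟩
  | par_zero =>
    intro h
    refine ⟨fun P' t => ?_, fun P' t => ⟨_, .par_l t, .par_zero⟩⟩
    cases t with
    | par_l t => exact ⟨_, t, .par_zero⟩
    | par_r t => cases t
  | restr_restr =>
    intro h
    refine ⟨fun P' t => ?_, fun P' t => ?_⟩
    · cases t with
      | restr t c =>
        cases t with
        | restr t d => exact ⟨_, .restr t (by simp only [Set.mem_union]; tauto), .restr_restr⟩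
    · cases t with
      | restr t c =>
        simp only [Set.mem_union] at c
        exact ⟨_, .restr (.restr t (by tauto)) (by tauto), .restr_restr⟩
  | @hide_hide P₀ L L' =>
    intro h
    refine ⟨fun P' t => ?_, fun P' t => ?_⟩
    · cases t with
      | hide_vis t c d =>
        cases t with
        | hide_vis t e f =>
          exact ⟨_, .hide_vis t (by simp [*]) (by simp [*]), .hide_hide⟩
        | hide_hid t e f =>
          exact ⟨_, .hide_hid t (by simp [*]) (by simp [*]), .hide_hide⟩
      | hide_hid t c d =>
        cases t with
        | hide_vis t e f =>
          exact ⟨_, .hide_hid t (by simp [*]) (by simp [*]), .hide_hide⟩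
        | hide_hid t e f =>
          exact ⟨_, .hide_hid t (by simp [*]) (by simp [*]), .hide_hide⟩
    · cases t with
      | hide_vis t c d =>
        simp only [Set.mem_union, not_or] at c d
        exact ⟨_, .hide_vis (.hide_vis t c.1 d.1) c.2 d.2, .hide_hide⟩
      | hide_hid t c d =>
        simp only [Set.mem_union, not_or] at c d
        by_cases e : l.bar ∈ L
        · by_cases f : l.bar ∈ L'
          · exact ⟨_, .hide_hid (.hide_hid t c.1 e) c.2 f, .hide_hide⟩
          · exact ⟨_, .hide_vis (.hide_hid t c.1 e) c.2 f, .hide_hide⟩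
        · exact ⟨_, .hide_hid (.hide_vis t c.1 e) c.2 (d.resolve_left e), .hide_hide⟩
  | restr_nil =>
    intro h
    refine ⟨fun P' t => ?_, fun P' t => ?_⟩
    · cases t with
      | restr t c => cases t
    · cases t
  | hide_nil =>
    intro h
    refine ⟨fun P' t => ?_, fun P' t => ?_⟩
    · cases t with
      | hide_vis t c => cases t
      | hide_hid t c => cases t
    · cases t
  | restr_pre_in hh =>
    intro h
    refine ⟨fun P' t => ?_, fun P' t => ?_⟩
    · cases t with
      | restr t c =>
        cases t
        simp at c
        tauto
    · cases t
  | restr_pre_out h1 h2 =>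
    intro h
    refine ⟨fun P' t => ?_, fun P' t => ?_⟩
    · cases t with
      | restr t c =>
        cases t
        exact ⟨_, .pre, .refl _⟩
    · cases t
      exact ⟨_, .restr .pre (.inr ⟨h1, h2⟩), .refl _⟩
  | restr_sum =>
    intro h
    refine ⟨fun P' t => ?_, fun P' t => ?_⟩
    · cases t with
      | restr t c =>
        cases t with
        | sum_l t => exact ⟨_, .sum_l (.restr t c), .refl _⟩
        | sum_r t => exact ⟨_, .sum_r (.restr t c), .refl _⟩
    · cases t with
      | sum_l t =>
        cases t with
        | restr t c => exact ⟨_, .restr (.sum_l t) c, .refl _⟩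
      | sum_r t =>
        cases t with
        | restr t c => exact ⟨_, .restr (.sum_r t) c, .refl _⟩
  | restr_scope_sum hv =>
    intro h
    refine ⟨fun P' t => ?_, fun P' t => ?_⟩
    · cases t with
      | restr t c =>
        cases t with
        | sum_l t => exact ⟨_, .sum_l t, .restr_id fun x hx => hv x (t.vis_sub x hx)⟩
        | sum_r t => exact ⟨_, .sum_r (.restr t c), .refl _⟩
    · cases t with
      | sum_l t =>
        refine ⟨_, .restr (.sum_l t) ?_, .restr_id fun x hx => hv x (t.vis_sub x hx)⟩
        cases h
        · exact .inr (hv _ (t.vis rfl))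
        · exact .inl rfl
      | sum_r t =>
        cases t with
        | restr t c => exact ⟨_, .restr (.sum_r t) c, .refl _⟩
  | restr_scope_par hv =>
    intro h
    refine ⟨fun P' t => ?_, fun P' t => ?_⟩
    · cases t with
      | restr t c =>
        cases t with
        | par_l t => exact ⟨_, .par_l t, .restr_scope_par fun x hx => hv x (t.vis_sub x hx)⟩
        | par_r t => exact ⟨_, .par_r (.restr t c), .restr_scope_par hv⟩
    · cases t with
      | par_l t =>
        refine ⟨_, .restr (.par_l t) ?_, .restr_scope_par fun x hx => hv x (t.vis_sub x hx)⟩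
        cases h
        · exact .inr (hv _ (t.vis rfl))
        · exact .inl rfl
      | par_r t =>
        cases t with
        | restr t c => exact ⟨_, .restr (.par_r t) c, .restr_scope_par hv⟩
  | restr_par hv =>
    intro h
    refine ⟨fun P' t => ?_, fun P' t => ?_⟩
    · cases t with
      | restr t c =>
        cases t with
        | par_l t =>
          exact ⟨_, .par_l (.restr t c), .restr_par fun x hx => hv x (t.vis_sub x hx)⟩
        | par_r t =>
          exact ⟨_, .par_r (.restr t c), .restr_par fun x hx hy => hv x hx (t.vis_sub _ hy)⟩
    · cases t with
      | par_l t =>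
        cases t with
        | restr t c =>
          exact ⟨_, .restr (.par_l t) c, .restr_par fun x hx => hv x (t.vis_sub x hx)⟩
      | par_r t =>
        cases t with
        | restr t c =>
          exact ⟨_, .restr (.par_r t) c, .restr_par fun x hx hy => hv x hx (t.vis_sub _ hy)⟩

/-- no visible occurrence of `l`, up to structural congruence -/
def NV (env : ℕ → Proc) (l : Label) (X : Proc) : Prop :=
  ∃ X0, SC env X X0 ∧ ¬ VisLabel env X0 l ∧ ¬ VisLabel env X0 l.bar

theorem NV.sc {env : ℕ → Proc} {l X Y} (h : NV env l X) (s : SC env X Y) : NV env l Y := by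
  obtain ⟨X0, a, b⟩ := h
  exact ⟨X0, s.symm.trans a, b⟩

/-- an available hidden prefix `l` -/
inductive Av (env : ℕ → Proc) (l : Label) : Bool → Proc → Prop
  | leaf : Tr env l H false P P' → l ∉ K → l.bar ∈ K → Av env l r (.hide P K)
  | sum_l : Av env l r P → Av env l r (.sum P Q)
  | sum_r : Av env l r Q → Av env l r (.sum P Q)
  | par_l : Av env l r P → Av env l r (.par P Q)
  | par_r : Av env l r Q → Av env l r (.par P Q)
  | restr_in : Av env l true P → Av env l r (.restr P L)
  | restr_out : Av env l r P → l ∉ L → l.bar ∉ L → Av env l r (.restr P L)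
  | hide : Av env l r' P → l ∉ K → (r = false ∨ NV env l (.hide P K)) → Av env l r (.hide P K)
  | ident : Av env l r (env n) → Av env l r (.ident n)

theorem Av.toFalse {env : ℕ → Proc} {l r P} (t : Av env l r P) : Av env l false P := by
  induction t with
  | leaf t a b => exact .leaf t a b
  | sum_l _ ih => exact .sum_l ih
  | sum_r _ ih => exact .sum_r ih
  | par_l _ ih => exact .par_l ih
  | par_r _ ih => exact .par_r ih
  | restr_in t _ => exact .restr_in t
  | restr_out _ a b ih => exact .restr_out ih a b
  | hide _ a _ ih => exact .hide ih a (.inl rfl)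
  | ident _ ih => exact .ident ih

theorem Av.ofTrue {env : ℕ → Proc} {l r P} (t : Av env l true P) : Av env l r P := by
  cases r
  · exact t.toFalse
  · exact t

theorem Av.toTrue {env : ℕ → Proc} {l r P} (t : Av env l r P) :
    ¬ VisLabel env P l → ¬ VisLabel env P l.bar → Av env l true P := by
  induction t with
  | leaf t a b => intros; exact .leaf t a b
  | sum_l _ ih => intro a b; exact .sum_l (ih (fun x => a (.sum_l x)) (fun x => b (.sum_l x)))
  | sum_r _ ih => intro a b; exact .sum_r (ih (fun x => a (.sum_r x)) (fun x => b (.sum_r x)))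
  | par_l _ ih => intro a b; exact .par_l (ih (fun x => a (.par_l x)) (fun x => b (.par_l x)))
  | par_r _ ih => intro a b; exact .par_r (ih (fun x => a (.par_r x)) (fun x => b (.par_r x)))
  | restr_in t _ => intros; exact .restr_in t
  | restr_out _ c d ih =>
    intro a b
    exact .restr_in (ih (fun x => a (.restr x c d))
      (fun x => b (.restr x d (by simpa using c))))
  | hide t c d ih => intro a b; exact .hide t c (.inr ⟨_, .refl _, a, b⟩)
  | ident _ ih => intro a b; exact .ident (ih (fun x => a (.ident x)) (fun x => b (.ident x)))

theorem Av.scope {env : ℕ → Proc} {l r P} {L : Set Label} (t : Av env l r P)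
    (hv : ∀ x, VisLabel env P x → x ∉ L ∧ x.bar ∉ L) :
    (l ∉ L ∧ l.bar ∉ L) ∨ Av env l true P := by
  by_cases h : l ∉ L ∧ l.bar ∉ L
  · exact .inl h
  · refine .inr (t.toTrue (fun a => h (hv _ a)) (fun a => h ?_))
    have := hv _ a
    simp at this
    exact ⟨this.2, this.1⟩

theorem Av.sc {env : ℕ → Proc} {l P Q} (s : SC env P Q) : ∀ r,
    Av env l r P ↔ Av env l r Q := by
  induction s with
  | refl P => exact fun _ => Iff.rfl
  | symm _ ih => exact fun r => (ih r).symm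
  | trans _ _ ih1 ih2 => exact fun r => (ih1 r).trans (ih2 r)
  | pre_congr _ _ => intro r; constructor <;> (intro t; cases t)
  | sum_congr _ _ ih1 ih2 =>
    intro r
    constructor
    · intro t
      cases t with
      | sum_l t => exact .sum_l ((ih1 r).1 t)
      | sum_r t => exact .sum_r ((ih2 r).1 t)
    · intro t
      cases t with
      | sum_l t => exact .sum_l ((ih1 r).2 t)
      | sum_r t => exact .sum_r ((ih2 r).2 t)
  | par_congr _ _ ih1 ih2 =>
    intro r
    constructor
    · intro t
      cases t with
      | par_l t => exact .par_l ((ih1 r).1 t)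
      | par_r t => exact .par_r ((ih2 r).1 t)
    · intro t
      cases t with
      | par_l t => exact .par_l ((ih1 r).2 t)
      | par_r t => exact .par_r ((ih2 r).2 t)
  | restr_congr _ ih =>
    intro r
    constructor
    · intro t
      cases t with
      | restr_in t => exact .restr_in ((ih _).1 t)
      | restr_out t a b => exact .restr_out ((ih _).1 t) a b
    · intro t
      cases t with
      | restr_in t => exact .restr_in ((ih _).2 t)
      | restr_out t a b => exact .restr_out ((ih _).2 t) a b
  | hide_congr s ih =>
    intro r
    constructor
    · intro t
      cases t with
      | leaf t a b => obtain ⟨q, u, v⟩ := (Tr.sc s _).1 _ t; exact .leaf u a b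
      | hide t a b => exact .hide ((ih _).1 t) a (b.imp_right fun n => n.sc (.hide_congr s))
    · intro t
      cases t with
      | leaf t a b => obtain ⟨q, u, v⟩ := (Tr.sc s _).2 _ t; exact .leaf u a b
      | hide t a b =>
        exact .hide ((ih _).2 t) a (b.imp_right fun n => n.sc (.hide_congr s.symm))
  | const =>
    intro r
    refine ⟨fun t => ?_, .ident⟩
    cases t with
    | ident t => exact t
  | sum_comm =>
    intro r
    constructor <;>
    · intro t
      cases t with
      | sum_l t => exact .sum_r t
      | sum_r t => exact .sum_l t
  | sum_assoc =>
    intro r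
    constructor
    · intro t
      cases t with
      | sum_l t =>
        cases t with
        | sum_l t => exact .sum_l t
        | sum_r t => exact .sum_r (.sum_l t)
      | sum_r t => exact .sum_r (.sum_r t)
    · intro t
      cases t with
      | sum_l t => exact .sum_l (.sum_l t)
      | sum_r t =>
        cases t with
        | sum_l t => exact .sum_l (.sum_r t)
        | sum_r t => exact .sum_r t
  | sum_zero =>
    intro r
    refine ⟨fun t => ?_, .sum_l⟩
    cases t with
    | sum_l t => exact t
    | sum_r t => cases t
  | sum_idem =>
    intro r
    refine ⟨fun t => ?_, .sum_l⟩
    cases t with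
    | sum_l t => exact t
    | sum_r t => exact t
  | par_comm =>
    intro r
    constructor <;>
    · intro t
      cases t with
      | par_l t => exact .par_r t
      | par_r t => exact .par_l t
  | par_assoc =>
    intro r
    constructor
    · intro t
      cases t with
      | par_l t =>
        cases t with
        | par_l t => exact .par_l t
        | par_r t => exact .par_r (.par_l t)
      | par_r t => exact .par_r (.par_r t)
    · intro t
      cases t with
      | par_l t => exact .par_l (.par_l t)
      | par_r t =>
        cases t with
        | par_l t => exact .par_l (.par_r t)
        | par_r t => exact .par_r t
  | par_zero =>
    intro r
    refine ⟨fun t => ?_, .par_l⟩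
    cases t with
    | par_l t => exact t
    | par_r t => cases t
  | restr_restr =>
    intro r
    constructor
    · intro t
      cases t with
      | restr_in t =>
        cases t with
        | restr_in t => exact .restr_in t
        | restr_out t a b => exact .restr_in t
      | restr_out t a b =>
        cases t with
        | restr_in t => exact .restr_in t
        | restr_out t c d => exact .restr_out t (by simp [*]) (by simp [*])
    · intro t
      cases t with
      | restr_in t => exact .restr_in (.restr_in t)
      | restr_out t a b =>
        simp only [Set.mem_union, not_or] at a b
        exact .restr_out (.restr_out t a.1 b.1) a.2 b.2
  | @hide_hide P L L' =>
    intro r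
    constructor
    · intro t
      cases t with
      | leaf t a b =>
        cases t with
        | hide_vis t c d => exact .leaf t (by simp [*]) (by simp [*])
      | hide t a b =>
        cases t with
        | leaf t c d => exact .leaf t (by simp [*]) (by simp [*])
        | hide t c d => exact .hide t (by simp [*]) (b.imp_right fun n => n.sc .hide_hide)
    · intro t
      cases t with
      | leaf t a b =>
        simp only [Set.mem_union, not_or] at a b
        by_cases e : l.bar ∈ L
        · refine .hide (.leaf (r := true) t a.1 e) a.2 (.inr ⟨_, .refl _, ?_, ?_⟩)
          · intro v
            cases v with
            | hide v _ _ =>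
              cases v with
              | hide v x y => exact y e
          · intro v
            cases v with
            | hide v _ _ =>
              cases v with
              | hide v x y => exact x e
        · exact .leaf (.hide_vis t a.1 e) a.2 (b.resolve_left e)
      | hide t a b =>
        simp only [Set.mem_union, not_or] at a
        exact .hide (.hide (r := false) t a.1 (.inl rfl)) a.2
          (b.imp_right fun n => n.sc (.symm .hide_hide))
  | restr_nil =>
    intro r
    constructor
    · intro t
      cases t with
      | restr_in t => cases t
      | restr_out t => cases t
    · intro t; cases t
  | hide_nil =>
    intro r
    constructor
    · intro t
      cases t with
      | leaf t => cases t
      | hide t => cases t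
    · intro t; cases t
  | restr_pre_in _ =>
    intro r
    constructor
    · intro t
      cases t with
      | restr_in t => cases t
      | restr_out t => cases t
    · intro t; cases t
  | restr_pre_out _ _ =>
    intro r
    constructor
    · intro t
      cases t with
      | restr_in t => cases t
      | restr_out t => cases t
    · intro t; cases t
  | restr_sum =>
    intro r
    constructor
    · intro t
      cases t with
      | restr_in t =>
        cases t with
        | sum_l t => exact .sum_l (.restr_in t)
        | sum_r t => exact .sum_r (.restr_in t)
      | restr_out t a b =>
        cases t with
        | sum_l t => exact .sum_l (.restr_out t a b)
        | sum_r t => exact .sum_r (.restr_out t a b)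
    · intro t
      cases t with
      | sum_l t =>
        cases t with
        | restr_in t => exact .restr_in (.sum_l t)
        | restr_out t a b => exact .restr_out (.sum_l t) a b
      | sum_r t =>
        cases t with
        | restr_in t => exact .restr_in (.sum_r t)
        | restr_out t a b => exact .restr_out (.sum_r t) a b
  | restr_scope_sum hv =>
    intro r
    constructor
    · intro t
      cases t with
      | restr_in t =>
        cases t with
        | sum_l t => exact .sum_l t.ofTrue
        | sum_r t => exact .sum_r (.restr_in t)
      | restr_out t a b =>
        cases t with
        | sum_l t => exact .sum_l t
        | sum_r t => exact .sum_r (.restr_out t a b)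
    · intro t
      cases t with
      | sum_l t =>
        rcases t.scope hv with c | c
        · exact .restr_out (.sum_l t) c.1 c.2
        · exact .restr_in (.sum_l c)
      | sum_r t =>
        cases t with
        | restr_in t => exact .restr_in (.sum_r t)
        | restr_out t a b => exact .restr_out (.sum_r t) a b
  | restr_scope_par hv =>
    intro r
    constructor
    · intro t
      cases t with
      | restr_in t =>
        cases t with
        | par_l t => exact .par_l t.ofTrue
        | par_r t => exact .par_r (.restr_in t)
      | restr_out t a b =>
        cases t with
        | par_l t => exact .par_l t
        | par_r t => exact .par_r (.restr_out t a b)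
    · intro t
      cases t with
      | par_l t =>
        rcases t.scope hv with c | c
        · exact .restr_out (.par_l t) c.1 c.2
        · exact .restr_in (.par_l c)
      | par_r t =>
        cases t with
        | restr_in t => exact .restr_in (.par_r t)
        | restr_out t a b => exact .restr_out (.par_r t) a b
  | restr_par hv =>
    intro r
    constructor
    · intro t
      cases t with
      | restr_in t =>
        cases t with
        | par_l t => exact .par_l (.restr_in t)
        | par_r t => exact .par_r (.restr_in t)
      | restr_out t a b =>
        cases t with
        | par_l t => exact .par_l (.restr_out t a b)
        | par_r t => exact .par_r (.restr_out t a b)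
    · intro t
      cases t with
      | par_l t =>
        cases t with
        | restr_in t => exact .restr_in (.par_l t)
        | restr_out t a b => exact .restr_out (.par_l t) a b
      | par_r t =>
        cases t with
        | restr_in t => exact .restr_in (.par_r t)
        | restr_out t a b => exact .restr_out (.par_r t) a b


theorem sync_chan {l l' : Label} (hc : l.isChan) : l'.sync ≠ .vis l := by
  cases l' <;> cases l <;> simp_all [Label.sync, Label.isChan]

theorem sync_tau {l : Label} (hc : l.isChan) : l.sync = .tau := by
  cases l <;> simp_all [Label.sync, Label.isChan]

theorem chan_not_clock {l : Label} (hc : l.isChan) : ¬ (Act.vis l).isClock := by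
  cases l <;> simp_all [Act.isClock, Label.isClock, Label.isChan]

theorem bar_ne {l : Label} (hc : l.isChan) : l.bar ≠ l := by
  cases l <;> simp_all [Label.bar, Label.isChan]

theorem Step.toTr {env : ℕ → Proc} {l P H R P'} (hc : l.isChan)
    (st : Step env P (.vis l) H R P') :
    ∃ H' h P'', Tr env l H' h P P'' ∧ SC env P' P'' := by
  generalize ha : Act.vis l = a at st
  induction st with
  | act => cases ha; exact ⟨_, _, _, .pre, .refl _⟩
  | struct _ s1 s2 _ ih =>
    obtain ⟨H', h, P'', t, s⟩ := ih ha
    obtain ⟨q, u, v⟩ := (Tr.sc s1 h).2 _ t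
    exact ⟨_, _, _, u, s2.trans (s.trans v.symm)⟩
  | sum_l _ ih => obtain ⟨H', h, P'', t, s⟩ := ih ha; exact ⟨_, _, _, .sum_l t, s⟩
  | sum_r _ ih => obtain ⟨H', h, P'', t, s⟩ := ih ha; exact ⟨_, _, _, .sum_r t, s⟩
  | par_l _ _ ih =>
    obtain ⟨H', h, P'', t, s⟩ := ih ha; exact ⟨_, _, _, .par_l t, .par_congr s (.refl _)⟩
  | par_r _ _ ih =>
    obtain ⟨H', h, P'', t, s⟩ := ih ha; exact ⟨_, _, _, .par_r t, .par_congr (.refl _) s⟩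
  | par_sync _ _ _ _ => exact absurd ha.symm (sync_chan hc)
  | restr _ c ih =>
    obtain ⟨H', h, P'', t, s⟩ := ih ha
    exact ⟨_, _, _, .restr t (.inr (c _ ha.symm)), .restr_congr s⟩
  | @hide_keep P a H R Q L _ c ih =>
    obtain ⟨H', h, P'', t, s⟩ := ih ha
    by_cases e : l.bar ∈ L
    · exact ⟨_, _, _, .hide_hid t (c _ ha.symm) e, .hide_congr s⟩
    · exact ⟨_, _, _, .hide_vis t (c _ ha.symm) e, .hide_congr s⟩
  | hide_tau => cases ha

theorem Step.clockTr {env : ℕ → Proc} {c P H R P'}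
    (st : Step env P (.vis (.clock c)) H R P') :
    (∃ H' P'', Tr env (.clock c) H' false P P'') ∧ SC env R .nil := by
  generalize ha : Act.vis (.clock c) = a at st
  induction st with
  | act => cases ha; exact ⟨⟨_, _, .pre⟩, .refl _⟩
  | struct _ s1 s2 s3 ih =>
    obtain ⟨⟨H', P'', t⟩, s⟩ := ih ha
    obtain ⟨q, u, v⟩ := (Tr.sc s1 _).2 _ t
    exact ⟨⟨_, _, u⟩, s3.trans s⟩
  | sum_l _ ih => obtain ⟨⟨H', P'', t⟩, s⟩ := ih ha; exact ⟨⟨_, _, .sum_l t⟩, s⟩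
  | sum_r _ ih => obtain ⟨⟨H', P'', t⟩, s⟩ := ih ha; exact ⟨⟨_, _, .sum_r t⟩, s⟩
  | par_l _ h ih => subst ha; simp [Act.isClock, Label.isClock] at h
  | par_r _ h ih => subst ha; simp [Act.isClock, Label.isClock] at h
  | @par_sync _ l _ _ _ _ _ _ _ _ _ ih1 ih2 =>
    cases l with
    | clock d =>
      simp [Label.sync] at ha
      subst ha
      obtain ⟨⟨H', P'', t⟩, s⟩ := ih1 rfl
      obtain ⟨_, s'⟩ := ih2 rfl
      exact ⟨⟨_, _, .par_l t⟩, (SC.par_congr s s').trans .par_zero⟩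
    | name _ => simp [Label.sync] at ha
    | coname _ => simp [Label.sync] at ha
  | restr _ c ih =>
    obtain ⟨⟨H', P'', t⟩, s⟩ := ih ha
    exact ⟨⟨_, _, .restr t (.inr (c _ ha.symm))⟩, (SC.restr_congr s).trans .restr_nil⟩
  | hide_keep _ c ih =>
    obtain ⟨⟨H', P'', t⟩, s⟩ := ih ha
    exact ⟨⟨_, _, .hide_vis t (c _ ha.symm) (c _ ha.symm)⟩, (SC.hide_congr s).trans .hide_nil⟩
  | hide_tau => cases ha

theorem Tr.init {env : ℕ → Proc} {l H h P P'} (hc : l.isChan) (t : Tr env l H h P P') :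
    h = false → InitAct env P (.vis l) := by
  have hk := chan_not_clock hc
  induction t with
  | pre => intro _; exact .pre
  | sum_l _ ih => intro e; exact .sum_l (ih e)
  | sum_r _ ih => intro e; exact .sum_r (ih e)
  | par_l _ ih => intro e; exact .par_l (ih e) hk
  | par_r _ ih => intro e; exact .par_r (ih e) hk
  | restr _ c ih =>
    intro e
    rcases c with c | c
    · simp [c] at e
    · exact .restr (ih e) (by rintro _ ⟨⟩; exact c)
  | hide_vis _ a b ih => intro e; exact .hide_keep (ih e) (by rintro _ ⟨⟩; exact a)
  | hide_hid _ _ _ ih => intro e; simp at e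
  | ident _ ih => intro e; exact .ident (ih e)

theorem Tr.step {env : ℕ → Proc} {l H h P P'} (hc : l.isChan) (t : Tr env l H h P P') :
    h = false → StepA env P (.vis l) P' := by
  have hk := chan_not_clock hc
  induction t with
  | pre => intro _; exact ⟨_, _, .act⟩
  | sum_l _ ih => intro e; obtain ⟨_, _, i⟩ := ih e; exact ⟨_, _, .sum_l i⟩
  | sum_r _ ih => intro e; obtain ⟨_, _, i⟩ := ih e; exact ⟨_, _, .sum_r i⟩
  | par_l _ ih => intro e; obtain ⟨_, _, i⟩ := ih e; exact ⟨_, _, .par_l i hk⟩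
  | par_r _ ih => intro e; obtain ⟨_, _, i⟩ := ih e; exact ⟨_, _, .par_r i hk⟩
  | restr _ c ih =>
    intro e
    obtain ⟨_, _, i⟩ := ih e
    rcases c with c | c
    · simp [c] at e
    · exact ⟨_, _, .restr i (by rintro _ ⟨⟩; exact c)⟩
  | hide_vis _ a b ih =>
    intro e
    obtain ⟨_, _, i⟩ := ih e
    exact ⟨_, _, .hide_keep i (by rintro _ ⟨⟩; exact a)⟩
  | hide_hid _ _ _ ih => intro e; simp at e
  | ident _ ih =>
    intro e
    obtain ⟨_, _, i⟩ := ih e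
    exact ⟨_, _, .struct i .const (.refl _) (.refl _)⟩

theorem Step.visOrAv {env : ℕ → Proc} {l P H R P'} (hc : l.isChan)
    (st : Step env P (.vis l) H R P') :
    (∃ H' P'', Tr env l H' false P P'') ∨ Av env l false P := by
  generalize ha : Act.vis l = a at st
  induction st with
  | act => cases ha; exact .inl ⟨_, _, .pre⟩
  | struct _ s1 s2 _ ih =>
    rcases ih ha with ⟨H', P'', t⟩ | t
    · obtain ⟨q, u, v⟩ := (Tr.sc s1 _).2 _ t
      exact .inl ⟨_, _, u⟩
    · exact .inr ((Av.sc s1 _).2 t)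
  | sum_l _ ih =>
    rcases ih ha with ⟨H', P'', t⟩ | t
    · exact .inl ⟨_, _, .sum_l t⟩
    · exact .inr (.sum_l t)
  | sum_r _ ih =>
    rcases ih ha with ⟨H', P'', t⟩ | t
    · exact .inl ⟨_, _, .sum_r t⟩
    · exact .inr (.sum_r t)
  | par_l _ _ ih =>
    rcases ih ha with ⟨H', P'', t⟩ | t
    · exact .inl ⟨_, _, .par_l t⟩
    · exact .inr (.par_l t)
  | par_r _ _ ih =>
    rcases ih ha with ⟨H', P'', t⟩ | t
    · exact .inl ⟨_, _, .par_r t⟩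
    · exact .inr (.par_r t)
  | par_sync _ _ _ _ => exact absurd ha.symm (sync_chan hc)
  | restr _ c ih =>
    rcases ih ha with ⟨H', P'', t⟩ | t
    · exact .inl ⟨_, _, .restr t (.inr (c _ ha.symm))⟩
    · exact .inr (.restr_out t (c _ ha.symm).1 (c _ ha.symm).2)
  | @hide_keep P a H R Q L _ c ih =>
    rcases ih ha with ⟨H', P'', t⟩ | t
    · by_cases e : l.bar ∈ L
      · exact .inr (.leaf t (c _ ha.symm) e)
      · exact .inl ⟨_, _, .hide_vis t (c _ ha.symm) e⟩
    · exact .inr (.hide t (c _ ha.symm) (.inl rfl))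
  | hide_tau => cases ha

theorem Step.ctxAv {env : ℕ → Proc} {l P H R P'} (hc : l.isChan)
    (st : Step env P (.vis l) H R P') :
    ((∃ H' P'', Tr env l H' false R P'') → (∃ H' P'', Tr env l H' false P P'')) ∧
    (Av env l false R → Av env l false P) := by
  generalize ha : Act.vis l = a at st
  induction st with
  | act => exact ⟨(by rintro ⟨_, _, t⟩; cases t), (by intro t; cases t)⟩
  | struct _ s1 s2 s3 ih =>
    obtain ⟨i1, i2⟩ := ih ha
    refine ⟨?_, fun t => (Av.sc s1 _).2 (i2 ((Av.sc s3 _).1 t))⟩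
    rintro ⟨_, _, t⟩
    obtain ⟨q, u, v⟩ := (Tr.sc s3 _).1 _ t
    obtain ⟨_, _, t'⟩ := i1 ⟨_, _, u⟩
    obtain ⟨q, u, v⟩ := (Tr.sc s1 _).2 _ t'
    exact ⟨_, _, u⟩
  | sum_l _ ih =>
    obtain ⟨i1, i2⟩ := ih ha
    refine ⟨?_, fun t => .sum_l (i2 t)⟩
    intro t
    obtain ⟨_, _, t'⟩ := i1 t
    exact ⟨_, _, .sum_l t'⟩
  | sum_r _ ih =>
    obtain ⟨i1, i2⟩ := ih ha
    refine ⟨?_, fun t => .sum_r (i2 t)⟩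
    intro t
    obtain ⟨_, _, t'⟩ := i1 t
    exact ⟨_, _, .sum_r t'⟩
  | par_l _ _ ih =>
    obtain ⟨i1, i2⟩ := ih ha
    constructor
    · rintro ⟨_, _, t⟩
      cases t with
      | par_l t => obtain ⟨_, _, t'⟩ := i1 ⟨_, _, t⟩; exact ⟨_, _, .par_l t'⟩
      | par_r t => exact ⟨_, _, .par_r t⟩
    · intro t
      cases t with
      | par_l t => exact .par_l (i2 t)
      | par_r t => exact .par_r t
  | par_r _ _ ih =>
    obtain ⟨i1, i2⟩ := ih ha
    constructor
    · rintro ⟨_, _, t⟩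
      cases t with
      | par_r t => obtain ⟨_, _, t'⟩ := i1 ⟨_, _, t⟩; exact ⟨_, _, .par_r t'⟩
      | par_l t => exact ⟨_, _, .par_l t⟩
    · intro t
      cases t with
      | par_r t => exact .par_r (i2 t)
      | par_l t => exact .par_l t
  | par_sync _ _ _ _ => exact absurd ha.symm (sync_chan hc)
  | restr _ c ih =>
    obtain ⟨i1, i2⟩ := ih ha
    have c' := c _ ha.symm
    constructor
    · rintro ⟨_, _, t⟩
      cases t with
      | restr t d => obtain ⟨_, _, t'⟩ := i1 ⟨_, _, t⟩; exact ⟨_, _, .restr t' d⟩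
    · intro t
      cases t with
      | restr_in t => exact .restr_out (i2 t.toFalse) c'.1 c'.2
      | restr_out t a b => exact .restr_out (i2 t) a b
  | hide_keep _ c ih =>
    obtain ⟨i1, i2⟩ := ih ha
    constructor
    · rintro ⟨_, _, t⟩
      cases t with
      | hide_vis t d e => obtain ⟨_, _, t'⟩ := i1 ⟨_, _, t⟩; exact ⟨_, _, .hide_vis t' d e⟩
    · intro t
      cases t with
      | leaf t a b => obtain ⟨_, _, t'⟩ := i1 ⟨_, _, t⟩; exact .leaf t' a b
      | hide t a b => exact .hide (i2 t.toFalse) a (.inl rfl)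
  | hide_tau => cases ha

/-- contexts that let `l` pass -/
inductive Ctx (l : Label) : (Proc → Proc) → Prop
  | id : Ctx l (fun y => y)
  | par_l : Ctx l C → Ctx l (fun y => .par (C y) D)
  | par_r : Ctx l C → Ctx l (fun y => .par D (C y))
  | restr : Ctx l C → l ∉ L → l.bar ∉ L → Ctx l (fun y => .restr (C y) L)
  | hide : Ctx l C → l ∉ K → Ctx l (fun y => .hide (C y) K)

theorem Ctx.step {env : ℕ → Proc} {l C y y'} (hc : l.isChan) (c : Ctx l C)
    (st : StepA env y (.vis l) y') : StepA env (C y) (.vis l) (C y') := by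
  have hk := chan_not_clock hc
  induction c with
  | id => exact st
  | par_l _ ih => obtain ⟨_, _, i⟩ := ih; exact ⟨_, _, .par_l i hk⟩
  | par_r _ ih => obtain ⟨_, _, i⟩ := ih; exact ⟨_, _, .par_r i hk⟩
  | restr _ a b ih =>
    obtain ⟨_, _, i⟩ := ih; exact ⟨_, _, .restr i (by rintro _ ⟨⟩; exact ⟨a, b⟩)⟩
  | hide _ a ih =>
    obtain ⟨_, _, i⟩ := ih; exact ⟨_, _, .hide_keep i (by rintro _ ⟨⟩; exact a)⟩

/-- one or more silent steps -/
def TP (env : ℕ → Proc) : Proc → Proc → Prop :=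
  Relation.TransGen (fun P Q => StepA env P .tau Q)

theorem TP.left {env : ℕ → Proc} {P P' Q} (t : TP env P' Q) (s : SC env P P') : TP env P Q := by
  induction t with
  | single h => obtain ⟨_, _, i⟩ := h; exact .single ⟨_, _, .struct i s (.refl _) (.refl _)⟩
  | tail _ h ih => exact .tail ih h

theorem TP.right {env : ℕ → Proc} {P Q Q'} (t : TP env P Q') (s : SC env Q Q') : TP env P Q := by
  cases t with
  | single h => obtain ⟨_, _, i⟩ := h; exact .single ⟨_, _, .struct i (.refl _) s (.refl _)⟩
  | tail a h => obtain ⟨_, _, i⟩ := h; exact .tail a ⟨_, _, .struct i (.refl _) s (.refl _)⟩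

theorem TP.sum_l {env : ℕ → Proc} {P Q R} (t : TP env P Q) : TP env (.sum P R) Q := by
  induction t with
  | single h => obtain ⟨_, _, i⟩ := h; exact .single ⟨_, _, .sum_l i⟩
  | tail _ h ih => exact .tail ih h

theorem TP.par_l {env : ℕ → Proc} {P Q R} (t : TP env P Q) : TP env (.par P R) (.par Q R) := by
  refine Relation.TransGen.lift (r := fun P Q => StepA env P .tau Q)
    (p := fun P Q => StepA env P .tau Q) (fun x => Proc.par x R) ?_ _ _ t
  rintro _ _ ⟨_, _, i⟩
  exact ⟨_, _, .par_l i (by simp [Act.isClock])⟩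

theorem TP.par_r {env : ℕ → Proc} {P Q R} (t : TP env P Q) : TP env (.par R P) (.par R Q) :=
  (t.par_l.left .par_comm).right .par_comm

theorem TP.restr {env : ℕ → Proc} {P Q L} (t : TP env P Q) : TP env (.restr P L) (.restr Q L) := by
  refine Relation.TransGen.lift (r := fun P Q => StepA env P .tau Q)
    (p := fun P Q => StepA env P .tau Q) (fun x => Proc.restr x L) ?_ _ _ t
  rintro _ _ ⟨_, _, i⟩
  exact ⟨_, _, .restr i (by simp)⟩

theorem TP.hide {env : ℕ → Proc} {P Q L} (t : TP env P Q) : TP env (.hide P L) (.hide Q L) := by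
  refine Relation.TransGen.lift (r := fun P Q => StepA env P .tau Q)
    (p := fun P Q => StepA env P .tau Q) (fun x => Proc.hide x L) ?_ _ _ t
  rintro _ _ ⟨_, _, i⟩
  exact ⟨_, _, .hide_keep i (by simp)⟩

theorem vis_empty {env : ℕ → Proc} {l Q} (hc : l.isChan) :
    ∀ x, ¬ VisLabel env (.hide Q {l}ᶜ) x := by
  intro x v
  cases v with
  | hide _ a b =>
    simp at a b
    subst a
    exact bar_ne hc b

theorem esc_core {env : ℕ → Proc} {l X Z Z'} (hc : l.isChan) (nv : NV env l X)
    (t : X = Z ∨ TP env X Z) (st : StepA env Z (.vis l) Z') :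
    ∀ Y, (∀ x, ¬ VisLabel env Y x) → TP env X (.par Y (.restr Z' {l})) := by
  intro Y hY
  obtain ⟨X0, s, n1, n2⟩ := nv
  have e : SC env X (.restr (.par X (.pre l.bar ∅ Y)) {l}) := by
    refine s.trans ?_
    refine SC.trans ?_ (.restr_congr (.par_congr s.symm (.refl _)))
    refine SC.symm (SC.trans (.restr_scope_par ?_) ?_)
    · intro x hx
      simp only [Set.mem_singleton_iff]
      refine ⟨fun e => n1 (e ▸ hx), fun e => n2 ?_⟩
      rw [← e]; simpa using hx
    · exact SC.trans (.par_congr (.refl _) (.restr_pre_in (.inr (by simp)))) .par_zero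
  obtain ⟨H, R, i⟩ := st
  have last : TP env (.restr (.par Z (.pre l.bar ∅ Y)) {l}) (.par Y (.restr Z' {l})) := by
    have j := Step.par_sync i (Step.act (env := env) (l := l.bar) (H := ∅) (P := Y))
    rw [sync_tau hc] at j
    have k := Step.restr (L := {l}) j (by simp)
    refine TP.right (.single ⟨_, _, k⟩) ?_
    refine SC.symm (SC.trans (.restr_congr .par_comm) (.restr_scope_par ?_))
    intro x hx
    exact absurd hx (hY x)
  refine TP.left ?_ e
  rcases t with t | t
  · subst t; exact last
  · exact Relation.TransGen.trans (TP.restr (TP.par_l t)) last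

theorem Av.esc {env : ℕ → Proc} {l r P} (hc : l.isChan) (t : Av env l r P) :
    (∃ C, Ctx l C ∧ ∀ Y, (∀ x, ¬ VisLabel env Y x) → TP env P (C Y)) ∧
    (r = true → ∃ D, ∀ Y, (∀ x, ¬ VisLabel env Y x) → TP env P (.par Y D)) := by
  have key : ∀ {P : Proc}, (∃ D, ∀ Y, (∀ x, ¬ VisLabel env Y x) → TP env P (.par Y D)) →
      ∃ C, Ctx l C ∧ ∀ Y, (∀ x, ¬ VisLabel env Y x) → TP env P (C Y) := by
    rintro P ⟨D, h⟩
    exact ⟨_, .par_l (D := D) .id, h⟩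
  have res : ∀ {P : Proc} {L}, (∃ D, ∀ Y, (∀ x, ¬ VisLabel env Y x) → TP env P (.par Y D)) →
      ∃ D, ∀ Y, (∀ x, ¬ VisLabel env Y x) → TP env (.restr P L) (.par Y D) := by
    rintro P L ⟨D, h⟩
    refine ⟨.restr D L, fun Y hY => TP.right (TP.restr (h Y hY)) ?_⟩
    exact SC.symm (.restr_scope_par (fun x hx => absurd hx (hY x)))
  induction t with
  | @leaf H P P' K r t a b =>
    obtain ⟨_, _, i⟩ := t.step hc rfl
    have st : StepA env (.hide P K) (.vis l) (.hide P' K) :=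
      ⟨_, _, .hide_keep i (by rintro _ ⟨⟩; exact a)⟩
    have nv : NV env l (.hide P K) := by
      refine ⟨_, .refl _, ?_, ?_⟩
      · intro v; cases v with
        | hide v x y => exact y b
      · intro v; cases v with
        | hide v x y => exact x b
    have := esc_core hc nv (.inl rfl) st
    exact ⟨key ⟨_, this⟩, fun _ => ⟨_, this⟩⟩
  | sum_l _ ih =>
    obtain ⟨⟨C, c, h⟩, g⟩ := ih
    refine ⟨⟨C, c, fun Y hY => (h Y hY).sum_l⟩, fun e => ?_⟩
    obtain ⟨D, d⟩ := g e
    exact ⟨D, fun Y hY => (d Y hY).sum_l⟩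
  | sum_r _ ih =>
    obtain ⟨⟨C, c, h⟩, g⟩ := ih
    refine ⟨⟨C, c, fun Y hY => (h Y hY).sum_l.left .sum_comm⟩, fun e => ?_⟩
    obtain ⟨D, d⟩ := g e
    exact ⟨D, fun Y hY => (d Y hY).sum_l.left .sum_comm⟩
  | @par_l r P Q _ ih =>
    obtain ⟨⟨C, c, h⟩, g⟩ := ih
    refine ⟨⟨_, .par_l (D := Q) c, fun Y hY => (h Y hY).par_l⟩, fun e => ?_⟩
    obtain ⟨D, d⟩ := g e
    exact ⟨.par D Q, fun Y hY => (d Y hY).par_l.right (.symm .par_assoc)⟩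
  | @par_r r Q P _ ih =>
    obtain ⟨⟨C, c, h⟩, g⟩ := ih
    refine ⟨⟨_, .par_r (D := P) c, fun Y hY => (h Y hY).par_r⟩, fun e => ?_⟩
    obtain ⟨D, d⟩ := g e
    exact ⟨.par D P, fun Y hY => ((d Y hY).par_l.right (.symm .par_assoc)).left .par_comm⟩
  | restr_in _ ih =>
    have := ih.2 rfl
    exact ⟨key (res this), fun _ => res this⟩
  | restr_out _ a b ih =>
    obtain ⟨⟨C, c, h⟩, g⟩ := ih
    exact ⟨⟨_, .restr c a b, fun Y hY => (h Y hY).restr⟩, fun e => res (g e)⟩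
  | hide _ a b ih =>
    obtain ⟨⟨C, c, h⟩, g⟩ := ih
    refine ⟨⟨_, .hide c a, fun Y hY => (h Y hY).hide⟩, fun e => ?_⟩
    have nv := b.resolve_left (by simp [e])
    have y0 : StepA env (.hide (.pre l ∅ .nil) {l}ᶜ) (.vis l) (.hide .nil {l}ᶜ) :=
      ⟨_, _, .hide_keep .act (by rintro _ ⟨⟩; simp)⟩
    exact ⟨_, esc_core hc nv (.inr (h _ (vis_empty hc)).hide) ((Ctx.hide c a).step hc y0)⟩
  | ident _ ih =>
    obtain ⟨⟨C, c, h⟩, g⟩ := ih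
    refine ⟨⟨C, c, fun Y hY => (h Y hY).left .const⟩, fun e => ?_⟩
    obtain ⟨D, d⟩ := g e
    exact ⟨D, fun Y hY => (d Y hY).left .const⟩

/-- blocking sets occurring in a term -/
def Occ : Proc → Set (Set Label)
  | .nil => ∅
  | .pre _ H P => {H} ∪ Occ P
  | .sum P Q => Occ P ∪ Occ Q
  | .par P Q => Occ P ∪ Occ Q
  | .restr P _ => Occ P
  | .hide P _ => Occ P
  | .ident _ => ∅

theorem Occ.countable (P : Proc) : (Occ P).Countable := by
  induction P with
  | nil => simp [Occ]
  | pre l H P ih => exact (Set.countable_singleton _).union ih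
  | sum P Q i j => exact i.union j
  | par P Q i j => exact i.union j
  | restr P L i => exact i
  | hide P L i => exact i
  | ident n => simp [Occ]

theorem exists_fresh (env : ℕ → Proc) (P : Proc) : ∃ S, S ∉ Occ P ∧ ∀ n, S ∉ Occ (env n) := by
  have hc : (Occ P ∪ ⋃ n, Occ (env n)).Countable :=
    (Occ.countable P).union (Set.countable_iUnion fun n => Occ.countable _)
  by_contra hne
  push Not at hne
  have hu : (Occ P ∪ ⋃ n, Occ (env n)) = Set.univ := by
    ext S
    simp only [Set.mem_union, Set.mem_iUnion, Set.mem_univ, iff_true]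
    by_cases h : S ∈ Occ P
    · exact .inl h
    · exact .inr (hne S h)
  rw [hu, Set.countable_univ_iff] at hc
  obtain ⟨f, hf⟩ := exists_injective_nat (Set Label)
  refine Function.cantor_injective (fun S => Label.name (f S)) ?_
  intro a b h
  simp at h
  exact hf h

theorem Tr.occ {env : ℕ → Proc} {l S S' h P P'} (hE : ∀ n, S ∉ Occ (env n))
    (t : Tr env l S' h P P') :
    S ∉ Occ P → S' ≠ S ∧ S ∉ Occ P' := by
  induction t with
  | pre => intro h; simp [Occ] at h; exact ⟨fun e => h.1 e.symm, h.2⟩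
  | sum_l _ ih => intro h; simp [Occ] at h; exact ih h.1
  | sum_r _ ih => intro h; simp [Occ] at h; exact ih h.2
  | par_l _ ih =>
    intro h; simp [Occ] at h; have := ih h.1; exact ⟨this.1, by simp [Occ]; exact ⟨this.2, h.2⟩⟩
  | par_r _ ih =>
    intro h; simp [Occ] at h; have := ih h.2; exact ⟨this.1, by simp [Occ]; exact ⟨h.1, this.2⟩⟩
  | restr _ _ ih => exact ih
  | hide_vis _ _ _ ih => exact ih
  | hide_hid _ _ _ ih => exact ih
  | ident _ ih => intro _; exact ih (hE _)

def Tagged (env : ℕ → Proc) (l : Label) (S : Set Label) (X : Proc) : Prop :=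
  ∃ h X', Tr env l S h X X'

theorem Tagged.sc {env : ℕ → Proc} {l S X Y} (t : Tagged env l S X) (s : SC env X Y) :
    Tagged env l S Y := by
  obtain ⟨h, _, t⟩ := t
  obtain ⟨_, u, _⟩ := (Tr.sc s h).1 _ t
  exact ⟨_, _, u⟩

theorem Tagged.hide {env : ℕ → Proc} {l S X} {K : Set Label} (t : Tagged env l S X) (hl : l ∉ K) :
    Tagged env l S (.hide X K) := by
  obtain ⟨h, _, t⟩ := t
  by_cases e : l.bar ∈ K
  · exact ⟨_, _, .hide_hid t hl e⟩
  · exact ⟨_, _, .hide_vis t hl e⟩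

theorem Tagged.par_l {env : ℕ → Proc} {l S X Y} (t : Tagged env l S X) :
    Tagged env l S (.par X Y) := by
  obtain ⟨h, _, t⟩ := t
  exact ⟨_, _, .par_l t⟩

theorem Tagged.par_r {env : ℕ → Proc} {l S X Y} (t : Tagged env l S Y) :
    Tagged env l S (.par X Y) := by
  obtain ⟨h, _, t⟩ := t
  exact ⟨_, _, .par_r t⟩

theorem Tagged.restr {env : ℕ → Proc} {l S X} {L : Set Label} (t : Tagged env l S X)
    (a : l ∉ L) (b : l.bar ∉ L) : Tagged env l S (.restr X L) := by
  obtain ⟨h, _, t⟩ := t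
  exact ⟨_, _, .restr t (.inr ⟨a, b⟩)⟩

theorem Ctx.tag {env : ℕ → Proc} {l S C y} (c : Ctx l C) (t : Tagged env l S y) :
    Tagged env l S (C y) := by
  induction c with
  | id => exact t
  | par_l _ ih => exact ih.par_l
  | par_r _ ih => exact ih.par_r
  | restr _ a b ih => exact ih.restr a b
  | hide _ a ih => exact ih.hide a

theorem Ctx.tr {env : ℕ → Proc} {l S C y} (c : Ctx l C) (t : Tagged env l S y)
    (ht : ∀ H h y', Tr env l H h y y' → Tagged env l S y') :
    ∀ H h z, Tr env l H h (C y) z → Tagged env l S z := by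
  induction c with
  | id => exact ht
  | par_l c ih =>
    intro H h z u
    cases u with
    | par_l u => exact (ih _ _ _ u).par_l
    | par_r u => exact (c.tag t).par_l
  | par_r c ih =>
    intro H h z u
    cases u with
    | par_l u => exact (c.tag t).par_r
    | par_r u => exact (ih _ _ _ u).par_r
  | restr c a b ih =>
    intro H h z u
    cases u with
    | restr u _ => exact (ih _ _ _ u).restr a b
  | hide c a ih =>
    intro H h z u
    cases u with
    | hide_vis u _ _ => exact (ih _ _ _ u).hide a
    | hide_hid u _ _ => exact (ih _ _ _ u).hide a

theorem not_coherent_esc {env : ℕ → Proc} {l P C} (hc : l.isChan) (hP : Coherent env P)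
    (c : Ctx l C) (h : ∀ Y, (∀ x, ¬ VisLabel env Y x) → TP env P (C Y)) : False := by
  obtain ⟨S, hS, hE⟩ := exists_fresh env (C (.hide .nil {l}ᶜ))
  have hl : l ∉ ({l}ᶜ : Set Label) := by simp
  obtain ⟨F, hF⟩ : ∃ F, Tagged env l S F := ⟨.pre l S .nil, _, _, .pre⟩
  have d := h (.hide (.sum (.pre l ∅ .nil) (.pre l ∅ (.par F F))) {l}ᶜ) (vis_empty hc)
  have s1 : StepA env (.hide (.sum (.pre l ∅ .nil) (.pre l ∅ (.par F F))) {l}ᶜ) (.vis l)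
      (.hide .nil {l}ᶜ) := ⟨_, _, .hide_keep (.sum_l .act) (by rintro _ ⟨⟩; exact hl)⟩
  have s2 : StepA env (.hide (.sum (.pre l ∅ .nil) (.pre l ∅ (.par F F))) {l}ᶜ) (.vis l)
      (.hide (.par F F) {l}ᶜ) := ⟨_, _, .hide_keep (.sum_r .act) (by rintro _ ⟨⟩; exact hl)⟩
  obtain ⟨H1, E1, t1⟩ := c.step hc s1
  obtain ⟨H2, E2, t2⟩ := c.step hc s2
  have hy : Tagged env l S (.hide (.par F F) {l}ᶜ) := hF.par_l.hide hl
  have hd : Deriv env P (C (.hide (.sum (.pre l ∅ .nil) (.pre l ∅ (.par F F))) {l}ᶜ)) :=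
    Relation.ReflTransGen.mono (r := fun P Q => StepA env P .tau Q)
      (p := fun P Q => ∃ a, StepA env P a Q) (fun _ _ i => ⟨_, i⟩) _ _ d.to_reflTransGen
  have nt : ∀ X, S ∉ Occ X → ¬ Tagged env l S X := by
    rintro X hX ⟨_, _, t⟩
    exact (t.occ hE hX).1 rfl
  have hne : ¬ SC env (C (.hide .nil {l}ᶜ)) (C (.hide (.par F F) {l}ᶜ)) := fun s =>
    nt _ hS ((c.tag hy).sc s.symm)
  obtain ⟨_, _, _, _, Q', _, _, u1, u2, _⟩ := hP _ hd _ _ _ _ _ _ _ _ t1 t2 (.inr (.inl hne))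
    ⟨by simp, by simp, by simp⟩
  obtain ⟨_, _, q1, r1, e1⟩ := u1.toTr hc
  obtain ⟨_, _, q2, r2, e2⟩ := u2.toTr hc
  have g1 := nt _ (r1.occ hE hS).2
  have g2 : Tagged env l S q2 := by
    refine c.tr hy ?_ _ _ _ r2
    intro H h y' u
    have : ∀ H h y', Tr env l H h (.par F F) y' → Tagged env l S y' := by
      intro H h y' u
      cases u with
      | par_l u => exact hF.par_r
      | par_r u => exact hF.par_l
    cases u with
    | hide_vis u _ _ => exact (this _ _ _ u).hide hl
    | hide_hid u _ _ => exact (this _ _ _ u).hide hl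
  exact g1 (g2.sc (e2.symm.trans e1))

theorem clock_det {env : ℕ → Proc} {P : Proc} (hP : Coherent env P) {c H₁ R₁ P₁ H₂ R₂ P₂}
    (t1 : Step env P (.vis (.clock c)) H₁ R₁ P₁) (t2 : Step env P (.vis (.clock c)) H₂ R₂ P₂) :
    SC env P₁ P₂ := by
  by_contra hne
  obtain ⟨_, _, _, _, Q', _, _, _, _, _, _, k⟩ := hP _ .refl _ _ _ _ _ _ _ _ t1 t2
    (.inr (.inl hne)) ⟨by simp, by simp, by simp⟩
  obtain ⟨⟨_, _, st⟩, _⟩ := k (.inr (.inl (by simp [Act.isClock, Label.isClock])))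
  obtain ⟨_, _, u⟩ := st.clockTr.1
  obtain ⟨_, v, _⟩ := (Tr.sc t1.clockTr.2 _).1 _ u
  cases v

theorem chan_det {env : ℕ → Proc} {P : Proc} (hP : Coherent env P) {l H₁ R₁ P₁ H₂ R₂ P₂}
    (hc : l.isChan) (t1 : Step env P (.vis l) H₁ R₁ P₁) (hn : ¬ InitAct env R₁ (.vis l))
    (t2 : Step env P (.vis l) H₂ R₂ P₂) : SC env P₁ P₂ := by
  by_contra hne
  obtain ⟨_, _, _, _, Q', _, _, _, _, _, _, k⟩ := hP _ .refl _ _ _ _ _ _ _ _ t1 t2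
    (.inr (.inl hne)) ⟨by simp, by simp, by simp⟩
  obtain ⟨⟨_, _, st⟩, _⟩ := k (.inl ⟨⟨_, hc, rfl⟩, ⟨_, hc, rfl⟩, .inr hne⟩)
  rcases st.visOrAv hc with ⟨_, _, u⟩ | u
  · exact hn (u.init hc rfl)
  · obtain ⟨⟨C, c, h⟩, _⟩ := ((t1.ctxAv hc).2 u).esc hc
    exact not_coherent_esc hc hP c h

/-- Action determinism and clock determinism. -/
theorem action_determinism (env : ℕ → Proc) (P : Proc) (hP : Coherent env P) :
    (∀ (l : Label) (H₁ : Set Act) (R₁ P₁ : Proc),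
        Step env P (Act.vis l) H₁ R₁ P₁ → ¬ InitAct env R₁ (Act.vis l) →
        ∀ (H₂ : Set Act) (R₂ P₂ : Proc),
          Step env P (Act.vis l) H₂ R₂ P₂ → SC env P₁ P₂) ∧
    (∀ (c : ℕ) (H₁ H₂ : Set Act) (R₁ R₂ P₁ P₂ : Proc),
        Step env P (Act.vis (Label.clock c)) H₁ R₁ P₁ →
        Step env P (Act.vis (Label.clock c)) H₂ R₂ P₂ → SC env P₁ P₂) := by
  refine ⟨?_, fun c H₁ H₂ R₁ R₂ P₁ P₂ t1 t2 => clock_det hP t1 t2⟩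
  intro l H₁ R₁ P₁ t1 hn H₂ R₂ P₂ t2
  cases l with
  | name a => exact chan_det hP (show (Label.name a).isChan from trivial) t1 hn t2
  | coname a => exact chan_det hP (show (Label.coname a).isChan from trivial) t1 hn t2
  | clock c => exact clock_det hP t1 t2

end CCSspt
end

section
/- Characterisation of pivot policies: a precedence policy π = (L, ⟶̇) is a pivot policy (i.e. π̄ ⪯ π) if and only if L̄ ⊆ L and for all ℓ₁, ℓ₂ ∈ L with ℓ₁ ≠ ℓ₂ one has π ⊩ ℓ₁ ◇ ℓ₂ or π ⊩ ℓ̄₁ ◇ ℓ̄₂. -/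
set_option autoImplicit true

namespace CCSspt

/-- Characterisation of pivot policies. -/
theorem pivot_characterisation (π : Policy) :
    π.IsPivot ↔
      (barSet π.alph ⊆ π.alph ∧
        ∀ l₁ l₂, l₁ ∈ π.alph → l₂ ∈ π.alph → l₁ ≠ l₂ →
          π.Indep l₁ l₂ ∨ π.Indep l₁.bar l₂.bar) := by
  constructor
  · rintro ⟨hA, hP⟩
    refine ⟨hA, fun l₁ l₂ h₁ h₂ hne => ?_⟩
    have hb : ∀ l, l ∈ π.alph → l.bar ∈ π.alph := fun l hl => hA ⟨l, hl, rfl⟩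
    have hd : ∀ l, l ∈ π.alph → l ∈ π.dual.alph :=
      fun l hl => ⟨l.bar, hb l hl, Label.bar_bar l⟩
    have hinj : l₁.bar ≠ l₂.bar := fun h => hne (by
      rw [← Label.bar_bar l₁, h, Label.bar_bar])
    by_cases h12 : π.prec l₁ l₂
    · rcases (hP l₁ l₂ (hd _ h₁) (hd _ h₂) h12).2.2 with h | h
      · exact absurd h hinj
      · exact Or.inr h
    by_cases h21 : π.prec l₂ l₁
    · rcases (hP l₂ l₁ (hd _ h₂) (hd _ h₁) h21).2.2 with h | h
      · exact absurd h.symm hinj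
      · exact Or.inr ⟨h.2.1, h.1, h.2.2.2, h.2.2.1⟩
    exact Or.inl ⟨h₁, h₂, h12, h21⟩
  · rintro ⟨hA, hI⟩
    refine ⟨hA, fun l₁ l₂ h₁ h₂ hp => ?_⟩
    have hb : ∀ l, l ∈ π.alph → l.bar ∈ π.alph := fun l hl => hA ⟨l, hl, rfl⟩
    refine ⟨hb _ (hA h₁), hb _ (hA h₂), ?_⟩
    by_cases he : l₁ = l₂
    · exact Or.inl (by rw [he])
    · rcases hI l₁ l₂ (hA h₁) (hA h₂) he with h | h
      · exact absurd hp h.2.2.1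
      · exact Or.inr h

end CCSspt
end

section
/- Coherence of rendez-vous prefixes: let Q : π (Q is coherent and conforms to π) and let ℓ ∈ ℛ be a rendez-vous label. If ℓ ∈ H and H ⊆ {ℓ' ∈ ℒ : π ⊩ ℓ' ⟶̇ ℓ}, then the prefix process ℓ:H.Q is coherent and conforms to π, i.e. ℓ:H.Q : π. -/
set_option autoImplicit true

namespace CCSspt

/-- struct-free transitions with hiding treated as inert -/
inductive TT (env : ℕ → Proc) : Proc → Label → Set Label → Proc → Proc → Prop
  | pre : TT env (.pre l K P) l K .nil P
  | sum_l : TT env P x K R P' → TT env (.sum P Q) x K R P'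
  | sum_r : TT env Q x K R P' → TT env (.sum P Q) x K R P'
  | par_l : TT env P x K R P' → TT env (.par P Q) x K (.par R Q) (.par P' Q)
  | par_r : TT env Q x K R Q' → TT env (.par P Q) x K (.par P R) (.par P Q')
  | restr : TT env P x K R P' → x ∉ L → x.bar ∉ L →
      TT env (.restr P L) x K (.restr R L) (.restr P' L)
  | ident : TT env (env n) x K R P' → TT env (.ident n) x K R P'

/-- wild processes: possibly capable of synchronisations or active below a hiding -/
inductive WW (env : ℕ → Proc) : Proc → Prop
  | hide_w : WW env P → WW env (.hide P L)
  | hide_t : TT env P x K R P' → WW env (.hide P L)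
  | sum_l : WW env P → WW env (.sum P Q)
  | sum_r : WW env Q → WW env (.sum P Q)
  | par_l : WW env P → WW env (.par P Q)
  | par_r : WW env Q → WW env (.par P Q)
  | sync : TT env P x K R P' → TT env Q x.bar K' R' Q' → WW env (.par P Q)
  | restr : WW env P → WW env (.restr P L)
  | ident : WW env (env n) → WW env (.ident n)

theorem TT.vis {env : ℕ → Proc} (h : TT env P x K R P') :
    VisLabel env P x ∧ (∀ y, VisLabel env R y → VisLabel env P y) ∧
      (∀ y, VisLabel env P' y → VisLabel env P y) := by
  induction h with
  | pre => exact ⟨.pre_act, fun y h => (by cases h), fun y h => .pre_cont h⟩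
  | sum_l _ ih => exact ⟨.sum_l ih.1, fun y h => .sum_l (ih.2.1 y h), fun y h => .sum_l (ih.2.2 y h)⟩
  | sum_r _ ih => exact ⟨.sum_r ih.1, fun y h => .sum_r (ih.2.1 y h), fun y h => .sum_r (ih.2.2 y h)⟩
  | par_l _ ih =>
    refine ⟨.par_l ih.1, fun y h => ?_, fun y h => ?_⟩
    · cases h with
      | par_l h => exact .par_l (ih.2.1 y h)
      | par_r h => exact .par_r h
    · cases h with
      | par_l h => exact .par_l (ih.2.2 y h)
      | par_r h => exact .par_r h
  | par_r _ ih =>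
    refine ⟨.par_r ih.1, fun y h => ?_, fun y h => ?_⟩
    · cases h with
      | par_r h => exact .par_r (ih.2.1 y h)
      | par_l h => exact .par_l h
    · cases h with
      | par_r h => exact .par_r (ih.2.2 y h)
      | par_l h => exact .par_l h
  | restr _ h1 h2 ih =>
    refine ⟨.restr ih.1 h1 h2, fun y h => ?_, fun y h => ?_⟩
    · cases h with
      | restr h a b => exact .restr (ih.2.1 y h) a b
    · cases h with
      | restr h a b => exact .restr (ih.2.2 y h) a b
  | ident _ ih => exact ⟨.ident ih.1, fun y h => .ident (ih.2.1 y h), fun y h => .ident (ih.2.2 y h)⟩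

theorem restr_fresh {env : ℕ → Proc} (h : ∀ x, VisLabel env P x → x ∉ L ∧ x.bar ∉ L) :
    SC env (.restr P L) P :=
  ((SC.restr_congr (SC.symm SC.par_zero)).trans (SC.restr_scope_par h)).trans
    ((SC.par_congr (SC.refl _) SC.restr_nil).trans SC.par_zero)

def Sim (env : ℕ → Proc) (P Q : Proc) : Prop :=
  ∀ x K R P', TT env P x K R P' → ∃ R' Q', TT env Q x K R' Q' ∧ SC env R R' ∧ SC env P' Q'

theorem sim_of_sc {env : ℕ → Proc} (h : SC env P Q) : Sim env P Q ∧ Sim env Q P := by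
  induction h with
  | refl P =>
    exact ⟨fun x K R P' h => ⟨_, _, h, .refl _, .refl _⟩, fun x K R P' h => ⟨_, _, h, .refl _, .refl _⟩⟩
  | symm _ ih => exact ⟨ih.2, ih.1⟩
  | trans _ _ ih1 ih2 =>
    constructor
    · intro x K R P' h
      obtain ⟨R1, P1, h1, a1, b1⟩ := ih1.1 _ _ _ _ h
      obtain ⟨R2, P2, h2, a2, b2⟩ := ih2.1 _ _ _ _ h1
      exact ⟨_, _, h2, a1.trans a2, b1.trans b2⟩
    · intro x K R P' h
      obtain ⟨R1, P1, h1, a1, b1⟩ := ih2.2 _ _ _ _ h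
      obtain ⟨R2, P2, h2, a2, b2⟩ := ih1.2 _ _ _ _ h1
      exact ⟨_, _, h2, a1.trans a2, b1.trans b2⟩
  | pre_congr h _ =>
    constructor
    · intro x K R P' t
      cases t
      exact ⟨_, _, .pre, .refl _, h⟩
    · intro x K R P' t
      cases t
      exact ⟨_, _, .pre, .refl _, h.symm⟩
  | sum_congr _ _ ih1 ih2 =>
    constructor
    · intro x K R P' t
      cases t with
      | sum_l t => obtain ⟨_, _, t, a, b⟩ := ih1.1 _ _ _ _ t; exact ⟨_, _, .sum_l t, a, b⟩
      | sum_r t => obtain ⟨_, _, t, a, b⟩ := ih2.1 _ _ _ _ t; exact ⟨_, _, .sum_r t, a, b⟩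
    · intro x K R P' t
      cases t with
      | sum_l t => obtain ⟨_, _, t, a, b⟩ := ih1.2 _ _ _ _ t; exact ⟨_, _, .sum_l t, a, b⟩
      | sum_r t => obtain ⟨_, _, t, a, b⟩ := ih2.2 _ _ _ _ t; exact ⟨_, _, .sum_r t, a, b⟩
  | par_congr h1 h2 ih1 ih2 =>
    constructor
    · intro x K R P' t
      cases t with
      | par_l t =>
        obtain ⟨_, _, t, a, b⟩ := ih1.1 _ _ _ _ t
        exact ⟨_, _, .par_l t, .par_congr a h2, .par_congr b h2⟩
      | par_r t =>
        obtain ⟨_, _, t, a, b⟩ := ih2.1 _ _ _ _ t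
        exact ⟨_, _, .par_r t, .par_congr h1 a, .par_congr h1 b⟩
    · intro x K R P' t
      cases t with
      | par_l t =>
        obtain ⟨_, _, t, a, b⟩ := ih1.2 _ _ _ _ t
        exact ⟨_, _, .par_l t, .par_congr a h2.symm, .par_congr b h2.symm⟩
      | par_r t =>
        obtain ⟨_, _, t, a, b⟩ := ih2.2 _ _ _ _ t
        exact ⟨_, _, .par_r t, .par_congr h1.symm a, .par_congr h1.symm b⟩
  | restr_congr _ ih =>
    constructor
    · intro x K R P' t
      cases t with
      | restr t h1 h2 =>
        obtain ⟨_, _, t, a, b⟩ := ih.1 _ _ _ _ t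
        exact ⟨_, _, .restr t h1 h2, .restr_congr a, .restr_congr b⟩
    · intro x K R P' t
      cases t with
      | restr t h1 h2 =>
        obtain ⟨_, _, t, a, b⟩ := ih.2 _ _ _ _ t
        exact ⟨_, _, .restr t h1 h2, .restr_congr a, .restr_congr b⟩
  | hide_congr _ ih => exact ⟨fun x K R P' t => (by cases t), fun x K R P' t => by cases t⟩
  | const =>
    constructor
    · intro x K R P' t
      cases t with
      | ident t => exact ⟨_, _, t, .refl _, .refl _⟩
    · intro x K R P' t
      exact ⟨_, _, .ident t, .refl _, .refl _⟩
  | sum_comm =>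
    constructor
    all_goals
      intro x K R P' t
      cases t with
      | sum_l t => exact ⟨_, _, .sum_r t, .refl _, .refl _⟩
      | sum_r t => exact ⟨_, _, .sum_l t, .refl _, .refl _⟩
  | sum_assoc =>
    constructor
    · intro x K R P' t
      cases t with
      | sum_l t =>
        cases t with
        | sum_l t => exact ⟨_, _, .sum_l t, .refl _, .refl _⟩
        | sum_r t => exact ⟨_, _, .sum_r (.sum_l t), .refl _, .refl _⟩
      | sum_r t => exact ⟨_, _, .sum_r (.sum_r t), .refl _, .refl _⟩
    · intro x K R P' t
      cases t with
      | sum_r t =>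
        cases t with
        | sum_r t => exact ⟨_, _, .sum_r t, .refl _, .refl _⟩
        | sum_l t => exact ⟨_, _, .sum_l (.sum_r t), .refl _, .refl _⟩
      | sum_l t => exact ⟨_, _, .sum_l (.sum_l t), .refl _, .refl _⟩
  | sum_zero =>
    constructor
    · intro x K R P' t
      cases t with
      | sum_l t => exact ⟨_, _, t, .refl _, .refl _⟩
      | sum_r t => cases t
    · intro x K R P' t
      exact ⟨_, _, .sum_l t, .refl _, .refl _⟩
  | sum_idem =>
    constructor
    · intro x K R P' t
      cases t with
      | sum_l t => exact ⟨_, _, t, .refl _, .refl _⟩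
      | sum_r t => exact ⟨_, _, t, .refl _, .refl _⟩
    · intro x K R P' t
      exact ⟨_, _, .sum_l t, .refl _, .refl _⟩
  | par_comm =>
    constructor
    all_goals
      intro x K R P' t
      cases t with
      | par_l t => exact ⟨_, _, .par_r t, .par_comm, .par_comm⟩
      | par_r t => exact ⟨_, _, .par_l t, .par_comm, .par_comm⟩
  | par_assoc =>
    constructor
    · intro x K R P' t
      cases t with
      | par_l t =>
        cases t with
        | par_l t => exact ⟨_, _, .par_l t, .par_assoc, .par_assoc⟩
        | par_r t => exact ⟨_, _, .par_r (.par_l t), .par_assoc, .par_assoc⟩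
      | par_r t => exact ⟨_, _, .par_r (.par_r t), .par_assoc, .par_assoc⟩
    · intro x K R P' t
      cases t with
      | par_r t =>
        cases t with
        | par_r t => exact ⟨_, _, .par_r t, .symm .par_assoc, .symm .par_assoc⟩
        | par_l t => exact ⟨_, _, .par_l (.par_r t), .symm .par_assoc, .symm .par_assoc⟩
      | par_l t => exact ⟨_, _, .par_l (.par_l t), .symm .par_assoc, .symm .par_assoc⟩
  | par_zero =>
    constructor
    · intro x K R P' t
      cases t with
      | par_l t => exact ⟨_, _, t, .par_zero, .par_zero⟩
      | par_r t => cases t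
    · intro x K R P' t
      exact ⟨_, _, .par_l t, .symm .par_zero, .symm .par_zero⟩
  | restr_restr =>
    constructor
    · intro x K R P' t
      cases t with
      | restr t h1 h2 =>
        cases t with
        | restr t h3 h4 =>
          exact ⟨_, _, .restr t (by simp [h1, h3]) (by simp [h2, h4]), .restr_restr, .restr_restr⟩
    · intro x K R P' t
      cases t with
      | restr t h1 h2 =>
        simp only [Set.mem_union, not_or] at h1 h2
        exact ⟨_, _, .restr (.restr t h1.1 h2.1) h1.2 h2.2, .symm .restr_restr, .symm .restr_restr⟩
  | hide_hide => exact ⟨fun x K R P' t => (by cases t), fun x K R P' t => by cases t⟩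
  | restr_nil =>
    refine ⟨fun x K R P' t => ?_, fun x K R P' t => by cases t⟩
    cases t with
    | restr t _ _ => cases t
  | hide_nil => exact ⟨fun x K R P' t => (by cases t), fun x K R P' t => by cases t⟩
  | restr_pre_in h =>
    refine ⟨fun x K R P' t => ?_, fun x K R P' t => by cases t⟩
    cases t with
    | restr t h1 h2 =>
      cases t
      exact (h.elim h1 h2).elim
  | restr_pre_out h1 h2 =>
    constructor
    · intro x K R P' t
      cases t with
      | restr t _ _ =>
        cases t
        exact ⟨_, _, .pre, .restr_nil, .refl _⟩
    · intro x K R P' t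
      cases t
      exact ⟨_, _, .restr .pre h1 h2, .symm .restr_nil, .refl _⟩
  | restr_sum =>
    constructor
    · intro x K R P' t
      cases t with
      | restr t h1 h2 =>
        cases t with
        | sum_l t => exact ⟨_, _, .sum_l (.restr t h1 h2), .refl _, .refl _⟩
        | sum_r t => exact ⟨_, _, .sum_r (.restr t h1 h2), .refl _, .refl _⟩
    · intro x K R P' t
      cases t with
      | sum_l t =>
        cases t with
        | restr t h1 h2 => exact ⟨_, _, .restr (.sum_l t) h1 h2, .refl _, .refl _⟩
      | sum_r t =>
        cases t with
        | restr t h1 h2 => exact ⟨_, _, .restr (.sum_r t) h1 h2, .refl _, .refl _⟩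
  | restr_scope_sum h =>
    constructor
    · intro x K R P' t
      cases t with
      | restr t h1 h2 =>
        cases t with
        | sum_l t =>
          exact ⟨_, _, .sum_l t, restr_fresh fun y hy => h y (t.vis.2.1 y hy),
            restr_fresh fun y hy => h y (t.vis.2.2 y hy)⟩
        | sum_r t => exact ⟨_, _, .sum_r (.restr t h1 h2), .refl _, .refl _⟩
    · intro x K R P' t
      cases t with
      | sum_l t =>
        have hx := h _ t.vis.1
        exact ⟨_, _, .restr (.sum_l t) hx.1 hx.2,
          (restr_fresh fun y hy => h y (t.vis.2.1 y hy)).symm,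
          (restr_fresh fun y hy => h y (t.vis.2.2 y hy)).symm⟩
      | sum_r t =>
        cases t with
        | restr t h1 h2 => exact ⟨_, _, .restr (.sum_r t) h1 h2, .refl _, .refl _⟩
  | restr_scope_par h =>
    constructor
    · intro x K R P' t
      cases t with
      | restr t h1 h2 =>
        cases t with
        | par_l t =>
          exact ⟨_, _, .par_l t, .restr_scope_par fun y hy => h y (t.vis.2.1 y hy),
            .restr_scope_par fun y hy => h y (t.vis.2.2 y hy)⟩
        | par_r t =>
          exact ⟨_, _, .par_r (.restr t h1 h2), .restr_scope_par h, .restr_scope_par h⟩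
    · intro x K R P' t
      cases t with
      | par_l t =>
        have hx := h _ t.vis.1
        exact ⟨_, _, .restr (.par_l t) hx.1 hx.2,
          (SC.restr_scope_par fun y hy => h y (t.vis.2.1 y hy)).symm,
          (SC.restr_scope_par fun y hy => h y (t.vis.2.2 y hy)).symm⟩
      | par_r t =>
        cases t with
        | restr t h1 h2 =>
          exact ⟨_, _, .restr (.par_r t) h1 h2, (SC.restr_scope_par h).symm,
            (SC.restr_scope_par h).symm⟩
  | restr_par h =>
    constructor
    · intro x K R P' t
      cases t with
      | restr t h1 h2 =>
        cases t with
        | par_l t =>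
          exact ⟨_, _, .par_l (.restr t h1 h2),
            .restr_par fun y hy hz => h y (t.vis.2.1 y hy) hz,
            .restr_par fun y hy hz => h y (t.vis.2.2 y hy) hz⟩
        | par_r t =>
          exact ⟨_, _, .par_r (.restr t h1 h2),
            .restr_par fun y hy hz => h y hy (t.vis.2.1 _ hz),
            .restr_par fun y hy hz => h y hy (t.vis.2.2 _ hz)⟩
    · intro x K R P' t
      cases t with
      | par_l t =>
        cases t with
        | restr t h1 h2 =>
          exact ⟨_, _, .restr (.par_l t) h1 h2,
            (SC.restr_par fun y hy hz => h y (t.vis.2.1 y hy) hz).symm,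
            (SC.restr_par fun y hy hz => h y (t.vis.2.2 y hy) hz).symm⟩
      | par_r t =>
        cases t with
        | restr t h1 h2 =>
          exact ⟨_, _, .restr (.par_r t) h1 h2,
            (SC.restr_par fun y hy hz => h y hy (t.vis.2.1 _ hz)).symm,
            (SC.restr_par fun y hy hz => h y hy (t.vis.2.2 _ hz)).symm⟩

/-- label enabled for `TT` -/
def En (env : ℕ → Proc) (P : Proc) (x : Label) : Prop := ∃ K R P', TT env P x K R P'

theorem En.congr {env : ℕ → Proc} (h : SC env P Q) (x : Label) : En env P x ↔ En env Q x := by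
  constructor
  · rintro ⟨K, R, P', t⟩
    obtain ⟨_, _, t, _, _⟩ := (sim_of_sc h).1 _ _ _ _ t
    exact ⟨_, _, _, t⟩
  · rintro ⟨K, R, P', t⟩
    obtain ⟨_, _, t, _, _⟩ := (sim_of_sc h).2 _ _ _ _ t
    exact ⟨_, _, _, t⟩

theorem En.vis {env : ℕ → Proc} (h : En env P x) : VisLabel env P x := by
  obtain ⟨_, _, _, t⟩ := h
  exact t.vis.1

theorem en_nil {env : ℕ → Proc} : ¬ En env .nil x := by
  rintro ⟨_, _, _, t⟩
  cases t

theorem en_hide {env : ℕ → Proc} : ¬ En env (.hide P L) x := by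
  rintro ⟨_, _, _, t⟩
  cases t

theorem en_par {env : ℕ → Proc} : En env (.par P Q) x ↔ En env P x ∨ En env Q x := by
  constructor
  · rintro ⟨_, _, _, t⟩
    cases t with
    | par_l t => exact .inl ⟨_, _, _, t⟩
    | par_r t => exact .inr ⟨_, _, _, t⟩
  · rintro (⟨_, _, _, t⟩ | ⟨_, _, _, t⟩)
    · exact ⟨_, _, _, .par_l t⟩
    · exact ⟨_, _, _, .par_r t⟩

theorem en_restr {env : ℕ → Proc} :
    En env (.restr P L) x ↔ En env P x ∧ x ∉ L ∧ x.bar ∉ L := by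
  constructor
  · rintro ⟨_, _, _, t⟩
    cases t with
    | restr t h1 h2 => exact ⟨⟨_, _, _, t⟩, h1, h2⟩
  · rintro ⟨⟨_, _, _, t⟩, h1, h2⟩
    exact ⟨_, _, _, .restr t h1 h2⟩

theorem ww_nil {env : ℕ → Proc} : ¬ WW env .nil := by intro h; cases h

theorem ww_pre {env : ℕ → Proc} : ¬ WW env (.pre l K P) := by intro h; cases h

theorem ww_hide {env : ℕ → Proc} : WW env (.hide P L) ↔ WW env P ∨ ∃ x, En env P x := by
  constructor
  · intro h
    cases h with
    | hide_w h => exact .inl h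
    | hide_t t => exact .inr ⟨_, _, _, _, t⟩
  · rintro (h | ⟨_, _, _, _, t⟩)
    · exact .hide_w h
    · exact .hide_t t

theorem ww_sum {env : ℕ → Proc} : WW env (.sum P Q) ↔ WW env P ∨ WW env Q := by
  constructor
  · intro h
    cases h with
    | sum_l h => exact .inl h
    | sum_r h => exact .inr h
  · rintro (h | h)
    · exact .sum_l h
    · exact .sum_r h

theorem ww_par {env : ℕ → Proc} : WW env (.par P Q) ↔
    WW env P ∨ WW env Q ∨ ∃ x, En env P x ∧ En env Q x.bar := by
  constructor
  · intro h
    cases h with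
    | par_l h => exact .inl h
    | par_r h => exact .inr (.inl h)
    | sync t u => exact .inr (.inr ⟨_, ⟨_, _, _, t⟩, ⟨_, _, _, u⟩⟩)
  · rintro (h | h | ⟨_, ⟨_, _, _, t⟩, ⟨_, _, _, u⟩⟩)
    · exact .par_l h
    · exact .par_r h
    · exact .sync t u

theorem ww_restr {env : ℕ → Proc} : WW env (.restr P L) ↔ WW env P := by
  constructor
  · intro h
    cases h with
    | restr h => exact h
  · exact .restr

theorem ww_ident {env : ℕ → Proc} : WW env (.ident n) ↔ WW env (env n) := by
  constructor
  · intro h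
    cases h with
    | ident h => exact h
  · exact .ident

theorem WW.congr {env : ℕ → Proc} (h : SC env P Q) : WW env P ↔ WW env Q := by
  induction h with
  | refl P => exact Iff.rfl
  | symm _ ih => exact ih.symm
  | trans _ _ ih1 ih2 => exact ih1.trans ih2
  | pre_congr _ _ => simp [ww_pre]
  | sum_congr _ _ ih1 ih2 => simp [ww_sum, ih1, ih2]
  | par_congr h1 h2 ih1 ih2 => simp [ww_par, ih1, ih2, En.congr h1, En.congr h2]
  | restr_congr _ ih => simp [ww_restr, ih]
  | hide_congr h ih => simp [ww_hide, ih, En.congr h]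
  | const => exact ww_ident
  | sum_comm => simp only [ww_sum]; tauto
  | sum_assoc => simp only [ww_sum]; tauto
  | sum_zero => simp [ww_sum, ww_nil]
  | sum_idem => simp [ww_sum]
  | @par_comm P Q =>
    have key : ∀ A B : Proc, (∃ x, En env A x ∧ En env B x.bar) →
        ∃ x, En env B x ∧ En env A x.bar := by
      rintro A B ⟨x, h1, h2⟩
      exact ⟨x.bar, h2, by simpa using h1⟩
    rw [ww_par, ww_par, or_left_comm, propext ⟨key P Q, key Q P⟩]
  | par_assoc =>
    simp only [ww_par, en_par, or_and_right, and_or_left, exists_or, or_assoc, or_comm, or_left_comm]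
  | par_zero => simp [ww_par, ww_nil, en_nil]
  | restr_restr => simp [ww_restr]
  | hide_hide => simp [ww_hide, en_hide]
  | restr_nil => simp [ww_restr]
  | hide_nil => simp [ww_hide, ww_nil, en_nil]
  | restr_pre_in h => simp [ww_restr, ww_pre, ww_nil]
  | restr_pre_out h1 h2 => simp [ww_restr, ww_pre]
  | restr_sum => simp [ww_restr, ww_sum]
  | restr_scope_sum h => simp [ww_restr, ww_sum]
  | restr_scope_par h =>
    simp only [ww_restr, ww_par, en_restr]
    refine or_congr_right (or_congr_right (exists_congr fun x => ?_))
    constructor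
    · rintro ⟨a, b⟩
      have := h x a.vis
      exact ⟨a, b, this.2, by simpa using this.1⟩
    · rintro ⟨a, b, _⟩
      exact ⟨a, b⟩
  | restr_par h =>
    simp only [ww_restr, ww_par, en_restr]
    refine or_congr_right (or_congr_right (exists_congr fun x => ?_))
    constructor
    · rintro ⟨a, b⟩
      have := h x a.vis b.vis
      exact ⟨⟨a, this⟩, b, this.2, by simpa using this.1⟩
    · rintro ⟨⟨a, _⟩, b, _⟩
      exact ⟨a, b⟩

theorem step_tt {env : ℕ → Proc} (h : Step env P a H R P') :
    WW env P ∨ ∃ x K R1 P1, a = .vis x ∧ TT env P x K R1 P1 ∧ SC env R R1 ∧ SC env P' P1 ∧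
      H ⊆ visSet K ∧ (x ∈ K → Act.vis x ∈ H) := by
  induction h with
  | act => exact .inr ⟨_, _, _, _, rfl, .pre, .refl _, .refl _, subset_rfl, fun h => ⟨_, h, rfl⟩⟩
  | struct _ h1 h2 h3 ih =>
    rcases ih with ih | ⟨x, K, R1, P1, e, t, a, b, c, d⟩
    · exact .inl ((WW.congr h1).2 ih)
    · obtain ⟨_, _, t, a', b'⟩ := (sim_of_sc h1).2 _ _ _ _ t
      exact .inr ⟨_, _, _, _, e, t, h3.trans (a.trans a'), h2.trans (b.trans b'), c, d⟩
  | sum_l _ ih =>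
    rcases ih with ih | ⟨x, K, R1, P1, e, t, a, b, c, d⟩
    · exact .inl (.sum_l ih)
    · exact .inr ⟨_, _, _, _, e, .sum_l t, a, b, c, d⟩
  | sum_r _ ih =>
    rcases ih with ih | ⟨x, K, R1, P1, e, t, a, b, c, d⟩
    · exact .inl (.sum_r ih)
    · exact .inr ⟨_, _, _, _, e, .sum_r t, a, b, c, d⟩
  | par_l _ _ ih =>
    rcases ih with ih | ⟨x, K, R1, P1, e, t, a, b, c, d⟩
    · exact .inl (.par_l ih)
    · exact .inr ⟨_, _, _, _, e, .par_l t, .par_congr a (.refl _), .par_congr b (.refl _), c, d⟩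
  | par_r _ _ ih =>
    rcases ih with ih | ⟨x, K, R1, P1, e, t, a, b, c, d⟩
    · exact .inl (.par_r ih)
    · exact .inr ⟨_, _, _, _, e, .par_r t, .par_congr (.refl _) a, .par_congr (.refl _) b, c, d⟩
  | par_sync _ _ ih1 ih2 =>
    left
    rcases ih1 with ih1 | ⟨x, K, R1, P1, e, t, -⟩
    · exact .par_l ih1
    rcases ih2 with ih2 | ⟨y, K, R1, P1, e', t', -⟩
    · exact .par_r ih2
    cases e
    cases e'
    exact .sync t t'
  | restr _ hL ih =>
    rcases ih with ih | ⟨x, K, R1, P1, e, t, a, b, c, d⟩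
    · exact .inl (.restr ih)
    · obtain ⟨h1, h2⟩ := hL x e
      refine .inr ⟨_, _, _, _, e, .restr t h1 h2, .restr_congr a, .restr_congr b,
        Set.sdiff_subset.trans c, fun hx => ⟨d hx, ?_⟩⟩
      rintro ⟨z, hz, hzx⟩
      cases hzx
      rcases hz with hz | ⟨w, hw, hwx⟩
      · exact h1 hz
      · subst hwx
        exact h2 (by simpa using hw)
  | hide_keep _ _ ih =>
    left
    rcases ih with ih | ⟨x, K, R1, P1, e, t, -⟩
    · exact .hide_w ih
    · exact .hide_t t
  | hide_tau _ _ ih =>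
    left
    rcases ih with ih | ⟨x, K, R1, P1, e, t, -⟩
    · exact .hide_w ih
    · exact .hide_t t

theorem step_pre {env : ℕ → Proc} (h : Step env (.pre l K Q) a H R P') :
    a = .vis l ∧ SC env P' Q ∧ H ⊆ visSet K ∧ (l ∈ K → Act.vis l ∈ H) := by
  rcases step_tt h with h | ⟨x, K, R1, P1, e, t, a, b, c, d⟩
  · exact (ww_pre h).elim
  · cases t
    exact ⟨e, b, c, d⟩

theorem deriv_pre {env : ℕ → Proc} (h : Deriv env (.pre l K Q) X) :
    X = .pre l K Q ∨ ∃ Y, Deriv env Q Y ∧ SC env Y X := by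
  induction h with
  | refl => exact .inl rfl
  | tail _ hs ih =>
    obtain ⟨a, H, R, s⟩ := hs
    rcases ih with rfl | ⟨Y, hY, hYX⟩
    · exact .inr ⟨Q, .refl, (step_pre s).2.1.symm⟩
    · exact .inr ⟨_, hY.tail ⟨a, H, R, .struct s hYX (.refl _) (.refl _)⟩, .refl _⟩

/-- Coherence of rendez-vous prefixes. -/
theorem prefix_coherent (env : ℕ → Proc) (Q : Proc) (π : Policy) (l : Label)
    (hl : l.isChan) (hQ : Spec env Q π) (H : Set Label)
    (hmem : l ∈ H) (hsub : H ⊆ {l' | π.prec l' l}) :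
    Spec env (Proc.pre l H Q) π := by
  constructor
  · intro X hX a₁ H₁ E₁ Q₁ a₂ H₂ E₂ Q₂ s₁ s₂ hne hI
    rcases deriv_pre hX with rfl | ⟨Y, hY, hYX⟩
    · obtain ⟨rfl, c1, -, d1⟩ := step_pre s₁
      obtain ⟨rfl, c2, -, d2⟩ := step_pre s₂
      rcases hne with h | h | ⟨-, -, h, -⟩
      · exact (h rfl).elim
      · exact (h (c1.trans c2.symm)).elim
      · exact (h (d2 hmem)).elim
    · exact hQ.1 Y hY a₁ H₁ E₁ Q₁ a₂ H₂ E₂ Q₂ (.struct s₁ hYX (.refl _) (.refl _))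
        (.struct s₂ hYX (.refl _) (.refl _)) hne hI
  · intro X hX x H' R X' s
    rcases deriv_pre hX with rfl | ⟨Y, hY, hYX⟩
    · obtain ⟨e, -, c, -⟩ := step_pre s
      cases e
      refine ⟨(π.prec_dom (hsub hmem)).1, fun l' h' => ?_⟩
      obtain ⟨z, hz, e⟩ := c h'
      cases e
      exact hsub hz
    · exact hQ.2 Y hY x H' R X' (.struct s hYX (.refl _) (.refl _))

end CCSspt
end
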